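/- arXiv:1307.7438 — 6 statements merged into one kernel-verified Lean document; each statement's English description precedes it below -/
import Mathlib

section
/- Let R̃^+ denote the set of positive roots of Q lying in L, and take β ∈ R̃^+ with Σ_{j=1}^{m^(i)} β_{[i,j]} > 0 for every i ∈ I_irr. Suppose there exists a ∈ J ∪ {vertices of the form [i,j,k]} such that β′ = s_a(β) satisfies β′_{[i,j]} = 0 for all i ∈ I_irr and all j. Then a = 𝐢 for some 𝐢 = ([i,j_i])_{0≤i≤p} ∈ J, and there exist i_0 ∈ {0,…,p} and l ∈ {1,…,e[i_0,j_{i_0}]−1} such that β = ε_𝐢 + ε_{[i_0,j_{i_0},1]} + ⋯ + ε_{[i_0,j_{i_0},l]}; in particular β is a real root of Q. -/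
open Polynomial Matrix BigOperators

namespace DS

noncomputable section

/-- The data of a collection of HTL normal forms `B⁽ⁱ⁾`, `i = 0,…,p`, on `ℂⁿ`:
block counts `m i`, pole orders `kk i`, block sizes `nn i j`, irregular parts
`q i j ∈ s²ℂ[s]` (pairwise distinct, degree ≤ kk i), residue blocks `R i j`,
chosen annihilating eigenvalue lists `ξ i j`, and an identification of
`Σ j, Fin (nn i j)` with `Fin n` (the block decomposition of `ℂⁿ`). -/
structure Setup where
  p : ℕ
  n : ℕ
  hn : 0 < n
  m : Fin (p+1) → ℕ
  hm : ∀ i, 0 < m i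
  kk : Fin (p+1) → ℕ
  hkk : ∀ i, 0 < kk i
  nn : ∀ i : Fin (p+1), Fin (m i) → ℕ
  q : ∀ i : Fin (p+1), Fin (m i) → Polynomial ℂ
  hq0 : ∀ i j, (q i j).coeff 0 = 0
  hq1 : ∀ i j, (q i j).coeff 1 = 0
  hqdeg : ∀ i j, (q i j).natDegree ≤ kk i
  hqdist : ∀ i : Fin (p+1), ∀ j j' : Fin (m i), j ≠ j' → q i j ≠ q i j'
  e : ∀ i : Fin (p+1), Fin (m i) → ℕ
  he : ∀ i j, 0 < e i j
  xi : ∀ (i : Fin (p+1)) (j : Fin (m i)), Fin (e i j) → ℂ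
  R : ∀ (i : Fin (p+1)) (j : Fin (m i)), Matrix (Fin (nn i j)) (Fin (nn i j)) ℂ
  hxi : ∀ i j, (((List.finRange (e i j)).map fun l => R i j - xi i j l • 1).prod) = 0
  emb : ∀ i : Fin (p+1), (Σ j : Fin (m i), Fin (nn i j)) ≃ Fin n
  hreg : ∀ i : Fin (p+1), ¬ (1 < m i ∨ i = 0) → kk i = 1

/-- `i ∈ I_irr` : the indices of irregular singular points together with `0`. -/
def Iirr (S : Setup) (i : Fin (S.p+1)) : Prop := 1 < S.m i ∨ i = 0

instance (S : Setup) : DecidablePred (Iirr S) := fun i =>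
  inferInstanceAs (Decidable (1 < S.m i ∨ i = 0))

/-- Vertices `[i,j]` for `i ∈ I_irr`. -/
abbrev Vb (S : Setup) := Σ i : {i : Fin (S.p+1) // Iirr S i}, Fin (S.m i.1)

/-- Vertices `[i,j,k]` for `0 ≤ i ≤ p`, `1 ≤ j ≤ m⁽ⁱ⁾`, `1 ≤ k ≤ e[i,j]-1`
(the third component `κ` encodes `k = κ+1`). -/
abbrev Vr (S : Setup) := Σ i : Fin (S.p+1), Σ j : Fin (S.m i), Fin (S.e i j - 1)

/-- The vertex set `Q₀` of the quiver `Q`. -/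
abbrev V (S : Setup) := Vb S ⊕ Vr S

/-- `d_i(j,j') = deg (q_j - q_j') - 2`. -/
def dcnt (S : Setup) (i : Fin (S.p+1)) (j j' : Fin (S.m i)) : ℕ :=
  (S.q i j - S.q i j').natDegree - 2

/-- The number of arrows of `Q` from a vertex `a` to a vertex `b`. -/
def arr (S : Setup) : V S → V S → ℕ
  | .inl ⟨i, j⟩, .inl ⟨i', j'⟩ =>
      (if i.1 = 0 ∧ i'.1 ≠ 0 then 1 else 0) +
      (if h : i = i' then
        (if (j : ℕ) < (j' : ℕ) then dcnt S i.1 j (Fin.cast (by rw [h]) j') else 0)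
       else 0)
  | .inl _, .inr _ => 0
  | .inr ⟨i, j, κ⟩, .inl ⟨i', j'⟩ =>
      (if i = i'.1 ∧ (j : ℕ) = (j' : ℕ) ∧ (κ : ℕ) = 0 then 1 else 0) +
      (if ¬ Iirr S i ∧ i'.1 = 0 ∧ (j : ℕ) = 0 ∧ (κ : ℕ) = 0 then 1 else 0)
  | .inr ⟨i, j, κ⟩, .inr ⟨i', j', κ'⟩ =>
      if i = i' ∧ (j : ℕ) = (j' : ℕ) ∧ (κ : ℕ) = (κ' : ℕ) + 1 then 1 else 0

/-- The Euler form `⟨β,γ⟩` of the quiver `Q`. -/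
def eform (S : Setup) (β γ : V S → ℤ) : ℤ :=
  (∑ a : V S, β a * γ a) - ∑ a : V S, ∑ b : V S, (arr S a b : ℤ) * β a * γ b

/-- The symmetrized bilinear form `(β,γ)`. -/
def bform (S : Setup) (β γ : V S → ℤ) : ℤ := eform S β γ + eform S γ β

/-- The quadratic form `q(β)`. -/
def qform (S : Setup) (β : V S → ℤ) : ℤ := eform S β β

/-- `p(β) = 1 - q(β)`. -/
def pform (S : Setup) (β : V S → ℤ) : ℤ := 1 - qform S β

/-- The coordinate vector `ε_a`. -/
def eps (S : Setup) (a : V S) : V S → ℤ := fun b => if b = a then 1 else 0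

/-- The fundamental reflection `s_a`. -/
def refl1 (S : Setup) (a : V S) (β : V S → ℤ) : V S → ℤ :=
  fun b => β b - bform S β (eps S a) * eps S a b

/-- Iterated fundamental reflections (a Weyl group element). -/
def reflList (S : Setup) (l : List (V S)) (β : V S → ℤ) : V S → ℤ :=
  l.foldr (refl1 S) β

/-- The support of a vector. -/
def supp (S : Setup) (β : V S → ℤ) : Set (V S) := {a | β a ≠ 0}

/-- The support of `β` is connected in the underlying graph of `Q`. -/
def connSupp (S : Setup) (β : V S → ℤ) : Prop :=
  ∀ a ∈ supp S β, ∀ b ∈ supp S β,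
    Relation.ReflTransGen
      (fun x y => (0 < arr S x y + arr S y x) ∧ x ∈ supp S β ∧ y ∈ supp S β) a b

/-- The fundamental set of the root system of `Q` (all vertices of `Q` are loop-free). -/
def fund (S : Setup) (β : V S → ℤ) : Prop :=
  β ≠ 0 ∧ (∀ a, 0 ≤ β a) ∧ connSupp S β ∧ ∀ a : V S, bform S β (eps S a) ≤ 0

/-- Real roots of `Q`. -/
def isRealRoot (S : Setup) (β : V S → ℤ) : Prop :=
  ∃ (l : List (V S)) (a : V S), β = reflList S l (eps S a)

/-- Imaginary roots of `Q`. -/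
def isImagRoot (S : Setup) (β : V S → ℤ) : Prop :=
  ∃ (l : List (V S)) (γ : V S → ℤ), (fund S γ ∨ fund S (-γ)) ∧ β = reflList S l γ

/-- Roots of `Q`. -/
def isRoot (S : Setup) (β : V S → ℤ) : Prop := isRealRoot S β ∨ isImagRoot S β

/-- Positive roots of `Q`. -/
def isPosRoot (S : Setup) (β : V S → ℤ) : Prop := isRoot S β ∧ ∀ a, 0 ≤ β a

/-- The index `0` as an element of `I_irr`. -/
def i0 (S : Setup) : {i : Fin (S.p+1) // Iirr S i} := ⟨0, Or.inr rfl⟩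

/-- The vertex `[0,j]`. -/
def v0 (S : Setup) (j : Fin (S.m 0)) : V S := Sum.inl ⟨i0 S, j⟩

/-- The vertex `[i,j]` for `i ∈ I_irr`. -/
def vI (S : Setup) (i : {i : Fin (S.p+1) // Iirr S i}) (j : Fin (S.m i.1)) : V S :=
  Sum.inl ⟨i, j⟩

/-- The lattice `L`: `Σ_j β_[0,j] = Σ_j β_[i,j]` for all `i ∈ I_irr ∖ {0}`. -/
def inL (S : Setup) (β : V S → ℤ) : Prop :=
  ∀ i : {i : Fin (S.p+1) // Iirr S i}, i.1 ≠ 0 →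
    (∑ j : Fin (S.m 0), β (v0 S j)) = ∑ j : Fin (S.m i.1), β (vI S i j)

/-- `L⁺ = L ∩ (ℤ≥0)^{Q₀}`. -/
def inLpos (S : Setup) (β : V S → ℤ) : Prop := inL S β ∧ ∀ a, 0 ≤ β a

/-- The dimension vector `α` (as natural numbers):
`α_[i,j] = n⁽ⁱ⁾_j`, `α_[i,j,k] = rank ∏_{l=1}^k (R⁽ⁱ⁾_j - ξ^{[i,j]}_l)`. -/
noncomputable def alN (S : Setup) : V S → ℕ
  | .inl ⟨i, j⟩ => S.nn i.1 j
  | .inr ⟨i, j, κ⟩ =>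
      ((((List.finRange (S.e i j)).take ((κ : ℕ) + 1)).map
          fun l => S.R i j - S.xi i j l • 1).prod).rank

/-- The dimension vector `α` as an integer vector. -/
noncomputable def alZ (S : Setup) : V S → ℤ := fun a => (alN S a : ℤ)

/-- The parameter `λ ∈ ℂ^{Q₀}`. -/
noncomputable def lam (S : Setup) : V S → ℂ
  | .inl ⟨i, j⟩ =>
      if h : i.1 = 0 then
        (- S.xi 0 (Fin.cast (by rw [h]) j) ⟨0, S.he 0 (Fin.cast (by rw [h]) j)⟩)
          - ∑ i' ∈ Finset.univ.filter (fun i' : Fin (S.p+1) => ¬ Iirr S i'),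
              S.xi i' ⟨0, S.hm i'⟩ ⟨0, S.he i' ⟨0, S.hm i'⟩⟩
      else - S.xi i.1 j ⟨0, S.he i.1 j⟩
  | .inr ⟨i, j, κ⟩ =>
      S.xi i j ⟨(κ : ℕ), by have := κ.2; omega⟩
        - S.xi i j ⟨(κ : ℕ) + 1, by have := κ.2; omega⟩

/-- Pairing `β · μ = Σ_a β_a μ_a` between `ℤ^{Q₀}` and `ℂ^{Q₀}`. -/
noncomputable def dotC (S : Setup) (β : V S → ℤ) (μ : V S → ℂ) : ℂ :=
  ∑ a : V S, (β a : ℂ) * μ a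

/-- `β ∈ R̃⁺_μ` : positive roots of `Q` lying in `L` with `β·μ = 0`. -/
def inRt (S : Setup) (μ : V S → ℂ) (β : V S → ℤ) : Prop :=
  isPosRoot S β ∧ inL S β ∧ dotC S β μ = 0

/-- `β ∈ ℕR̃⁺_μ` : finite sums (including `0`) of elements of `R̃⁺_μ`. -/
def inNRt (S : Setup) (μ : V S → ℂ) (β : V S → ℤ) : Prop :=
  ∃ (r : ℕ) (γ : Fin r → (V S → ℤ)), (∀ t, inRt S μ (γ t)) ∧ β = ∑ t, γ t

/-- `β ∈ Σ̃_μ`. -/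
def inSig (S : Setup) (μ : V S → ℂ) (β : V S → ℤ) : Prop :=
  inRt S μ β ∧ ∀ (r : ℕ), 2 ≤ r → ∀ γ : Fin r → (V S → ℤ),
    (∀ t, inRt S μ (γ t)) → β = ∑ t, γ t → (∑ t, pform S (γ t)) < pform S β

/-! ### The matrix side: truncated orbits.

An element `Σ_{j=1}^{k} A_j x^{-j}` of `𝔤_k*` is encoded as the polynomial matrix
`Σ_{j=1}^{k} A_j x^{k-j}` (of degree `< k`); the coadjoint `G_k`-action becomes
conjugation modulo `x^k` by polynomial matrices with invertible constant term. -/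

abbrev PMat (S : Setup) := Matrix (Fin S.n) (Fin S.n) (Polynomial ℂ)

/-- All entries have degree `< k`. -/
def degLT (S : Setup) (k : ℕ) (A : PMat S) : Prop :=
  ∀ a b, (A a b).degree < (k : ℕ)

/-- The HTL normal form `B⁽ⁱ⁾`, in the polynomial encoding. -/
noncomputable def Bmat (S : Setup) (i : Fin (S.p+1)) : PMat S :=
  Matrix.of fun a b =>
    if h : ((S.emb i).symm a).1 = ((S.emb i).symm b).1 then
      (if Fin.cast (by rw [h]) ((S.emb i).symm a).2 = ((S.emb i).symm b).2 then
          Polynomial.reflect (S.kk i) (S.q i ((S.emb i).symm b).1)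
        else 0)
        + Polynomial.C
            (S.R i ((S.emb i).symm b).1 (Fin.cast (by rw [h]) ((S.emb i).symm a).2)
              ((S.emb i).symm b).2)
          * Polynomial.X ^ (S.kk i - 1)
    else 0

/-- Membership in the truncated orbit `𝒪_{B⁽ⁱ⁾}`. -/
def inOrbit (S : Setup) (i : Fin (S.p+1)) (A : PMat S) : Prop :=
  degLT S (S.kk i) A ∧
  ∃ g : PMat S, IsUnit (g.map fun r => r.coeff 0) ∧
    ∀ a b, (Polynomial.X ^ (S.kk i) : Polynomial ℂ) ∣ (g * Bmat S i - A * g) a b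

/-- The residue matrix `A⁽ⁱ⁾₁`. -/
def resMat (S : Setup) (i : Fin (S.p+1)) (A : PMat S) : Matrix (Fin S.n) (Fin S.n) ℂ :=
  Matrix.of fun a b => (A a b).coeff (S.kk i - 1)

/-- `(A⁽ⁱ⁾)_{0≤i≤p} ∈ ∏ 𝒪_{B⁽ⁱ⁾}` with `Σ A⁽ⁱ⁾₁ = 0`. -/
def isDSElem (S : Setup) (A : ∀ _ : Fin (S.p+1), PMat S) : Prop :=
  (∀ i, inOrbit S i (A i)) ∧ (∑ i, resMat S i (A i)) = 0

/-- Irreducibility of the collection of all coefficient matrices `A⁽ⁱ⁾_j`. -/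
def irredTuple (S : Setup) (A : ∀ _ : Fin (S.p+1), PMat S) : Prop :=
  ∀ W : Submodule ℂ (Fin S.n → ℂ),
    (∀ (i : Fin (S.p+1)) (l : ℕ), ∀ v ∈ W,
        (Matrix.of fun a b => (A i a b).coeff l).mulVec v ∈ W) →
    W = ⊥ ∨ W = ⊤

/-! ### Representations of the double quiver -/

/-- A representation of the double quiver `Q̄` with dimension vector `β`:
`f a b ρ` is the matrix of `ψ_ρ : ℂ^{β a} → ℂ^{β b}` and `g a b ρ` the matrix of
`ψ_{ρ*} : ℂ^{β b} → ℂ^{β a}`, for the `ρ`-th arrow `a → b` of `Q`. -/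
structure Rep (S : Setup) (β : V S → ℕ) where
  f : ∀ a b : V S, Fin (arr S a b) → Matrix (Fin (β b)) (Fin (β a)) ℂ
  g : ∀ a b : V S, Fin (arr S a b) → Matrix (Fin (β a)) (Fin (β b)) ℂ

/-- The moment map at a vertex `c`. -/
noncomputable def moment (S : Setup) {β : V S → ℕ} (M : Rep S β) (c : V S) :
    Matrix (Fin (β c)) (Fin (β c)) ℂ :=
  (∑ a : V S, ∑ ρ : Fin (arr S a c), M.f a c ρ * M.g a c ρ)
    - ∑ b : V S, ∑ ρ : Fin (arr S c b), M.g c b ρ * M.f c b ρ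

/-- `M ∈ Rep(Q̄,β)_μ`. -/
def onMu (S : Setup) {β : V S → ℕ} (μ : V S → ℂ) (M : Rep S β) : Prop :=
  ∀ c : V S, moment S M c = μ c • (1 : Matrix (Fin (β c)) (Fin (β c)) ℂ)

/-- The block matrix `(ψ_{ρ^{[0,j]}_{[i,j']}})_{j,j'}` for `i ∈ I_irr ∖ {0}`. -/
noncomputable def crossMat (S : Setup) {β : V S → ℕ} (M : Rep S β)
    (i : {i : Fin (S.p+1) // Iirr S i}) :
    Matrix (Σ j' : Fin (S.m i.1), Fin (β (vI S i j'))) (Σ j : Fin (S.m 0), Fin (β (v0 S j))) ℂ :=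
  Matrix.of fun x y =>
    if h : 0 < arr S (v0 S y.1) (vI S i x.1) then
      M.f (v0 S y.1) (vI S i x.1) ⟨0, h⟩ x.2 y.2
    else 0

/-- All the block matrices `(ψ_{ρ^{[0,j]}_{[i,j']}})` for `i ∈ I_irr ∖ {0}` are invertible. -/
def crossBij (S : Setup) {β : V S → ℕ} (M : Rep S β) : Prop :=
  ∀ i : {i : Fin (S.p+1) // Iirr S i}, i.1 ≠ 0 →
    Function.Bijective ((crossMat S M i).mulVec)

/-- The combined map `(ψ_{ρ^{[i,1,1]}_{[0,j]}})_j : ℂ^{β [i,1,1]} → ⊕_j ℂ^{β [0,j]}`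
(for `i ∈ I_reg`). -/
noncomputable def regMatF (S : Setup) {β : V S → ℕ} (M : Rep S β)
    (i : Fin (S.p+1)) (j : Fin (S.m i)) (κ : Fin (S.e i j - 1)) :
    Matrix (Σ j' : Fin (S.m 0), Fin (β (v0 S j'))) (Fin (β (Sum.inr ⟨i, j, κ⟩))) ℂ :=
  Matrix.of fun x y =>
    if h : 0 < arr S (Sum.inr ⟨i, j, κ⟩) (v0 S x.1) then
      M.f (Sum.inr ⟨i, j, κ⟩) (v0 S x.1) ⟨0, h⟩ x.2 y
    else 0

/-- The combined map `(ψ_{(ρ^{[i,1,1]}_{[0,j]})*})_j : ⊕_j ℂ^{β [0,j]} → ℂ^{β [i,1,1]}`. -/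
noncomputable def regMatG (S : Setup) {β : V S → ℕ} (M : Rep S β)
    (i : Fin (S.p+1)) (j : Fin (S.m i)) (κ : Fin (S.e i j - 1)) :
    Matrix (Fin (β (Sum.inr ⟨i, j, κ⟩))) (Σ j' : Fin (S.m 0), Fin (β (v0 S j'))) ℂ :=
  Matrix.of fun y x =>
    if h : 0 < arr S (Sum.inr ⟨i, j, κ⟩) (v0 S x.1) then
      M.g (Sum.inr ⟨i, j, κ⟩) (v0 S x.1) ⟨0, h⟩ y x.2
    else 0

/-- `M ∈ Rep(Q̄,β)_μ^{dif}` (the open conditions). -/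
def difCond (S : Setup) {β : V S → ℕ} (M : Rep S β) : Prop :=
  crossBij S M ∧
  (∀ (i : Fin (S.p+1)), ¬ Iirr S i → ∀ (j : Fin (S.m i)) (κ : Fin (S.e i j - 1)),
      (κ : ℕ) = 0 →
      Function.Injective ((regMatF S M i j κ).mulVec) ∧
      Function.Surjective ((regMatG S M i j κ).mulVec)) ∧
  (∀ (i : Fin (S.p+1)) (j : Fin (S.m i)) (κ : Fin (S.e i j - 1)) (b : V S)
      (ρ : Fin (arr S (Sum.inr ⟨i, j, κ⟩) b)),
      (¬ Iirr S i ∧ (κ : ℕ) = 0) ∨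
      (Function.Injective ((M.f (Sum.inr ⟨i, j, κ⟩) b ρ).mulVec) ∧
       Function.Surjective ((M.g (Sum.inr ⟨i, j, κ⟩) b ρ).mulVec)))

/-- A family of subspaces forming a subrepresentation of `M`. -/
def isSubrep (S : Setup) {β : V S → ℕ} (M : Rep S β)
    (W : ∀ a : V S, Submodule ℂ (Fin (β a) → ℂ)) : Prop :=
  ∀ (a b : V S) (ρ : Fin (arr S a b)),
    (∀ v ∈ W a, (M.f a b ρ).mulVec v ∈ W b) ∧ (∀ v ∈ W b, (M.g a b ρ).mulVec v ∈ W a)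

/-- Irreducibility of a representation. -/
def irredRep (S : Setup) {β : V S → ℕ} (M : Rep S β) : Prop :=
  ∀ W, isSubrep S M W → (∀ a, W a = ⊥) ∨ (∀ a, W a = ⊤)

/-- A dimension vector is balanced if `Σ_j γ_[0,j] = Σ_j γ_[i,j]` for all `i ∈ I_irr∖{0}`. -/
def balanced (S : Setup) (γ : V S → ℕ) : Prop :=
  ∀ i : {i : Fin (S.p+1) // Iirr S i}, i.1 ≠ 0 →
    (∑ j : Fin (S.m 0), γ (v0 S j)) = ∑ j : Fin (S.m i.1), γ (vI S i j)

/-- Quasi-irreducibility: no nontrivial proper subrepresentation with balanced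
dimension vector. -/
def quasiIrred (S : Setup) {β : V S → ℕ} (M : Rep S β) : Prop :=
  ∀ W, isSubrep S M W → balanced S (fun a => Module.finrank ℂ (W a)) →
    (∀ a, W a = ⊥) ∨ (∀ a, W a = ⊤)

/-- Simultaneous conjugation of representations by `∏_a GL(β_a, ℂ)`. -/
def repConj (S : Setup) {β : V S → ℕ} (M N : Rep S β) : Prop :=
  ∃ g : ∀ a : V S, (Matrix (Fin (β a)) (Fin (β a)) ℂ)ˣ,
    (∀ a b ρ, N.f a b ρ = ((g b).val * M.f a b ρ) * ((g a)⁻¹).val) ∧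
    (∀ a b ρ, N.g a b ρ = ((g a).val * M.g a b ρ) * ((g b)⁻¹).val)

/-- Simultaneous conjugation of tuples by `GL(n, ℂ)`. -/
def tupConj (S : Setup) (A A' : ∀ _ : Fin (S.p+1), PMat S) : Prop :=
  ∃ g : (Matrix (Fin S.n) (Fin S.n) ℂ)ˣ,
    ∀ i, A' i = (g.val.map Polynomial.C) * A i * ((g⁻¹).val.map Polynomial.C)

/-- Carrier of the moduli space `ℳ*_{st}(𝐁)`. -/
abbrev MstC (S : Setup) := {A : ∀ _ : Fin (S.p+1), PMat S // isDSElem S A ∧ irredTuple S A}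

/-- The moduli space `ℳ*_{st}(𝐁)` of stable connections, identified with conjugacy
classes of irreducible elements of `∏ 𝒪_{B⁽ⁱ⁾}` with vanishing residue sum. -/
abbrev Mst (S : Setup) := Quot (fun A A' : MstC S => tupConj S A.1 A'.1)

abbrev DSC (S : Setup) := {A : ∀ _ : Fin (S.p+1), PMat S // isDSElem S A}

abbrev DSQ (S : Setup) := Quot (fun A A' : DSC S => tupConj S A.1 A'.1)

abbrev RepIrrC (S : Setup) (μ : V S → ℂ) :=
  {M : Rep S (alN S) // onMu S μ M ∧ irredRep S M}

/-- The quiver variety `𝔐^{reg}_μ(Q,α)`. -/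
abbrev Mreg (S : Setup) (μ : V S → ℂ) :=
  Quot (fun M N : RepIrrC S μ => repConj S M.1 N.1)

abbrev DifC (S : Setup) (μ : V S → ℂ) :=
  {M : Rep S (alN S) // onMu S μ M ∧ difCond S M}

abbrev DifQ (S : Setup) (μ : V S → ℂ) :=
  Quot (fun M N : DifC S μ => repConj S M.1 N.1)

abbrev QIC (S : Setup) (μ : V S → ℂ) :=
  {M : Rep S (alN S) // onMu S μ M ∧ quasiIrred S M ∧ crossBij S M}

abbrev QIQ (S : Setup) (μ : V S → ℂ) :=
  Quot (fun M N : QIC S μ => repConj S M.1 N.1)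

/-! ### `J`, `ε_𝐢`, and the equivalence relation `∼` -/

/-- `ε_𝐢 = Σ_{i ∈ I_irr} ε_{[i,j_i]}` for `𝐢 = ([i,j_i]) ∈ 𝒥`. -/
def epsJ (S : Setup) (I : ∀ i : Fin (S.p+1), Fin (S.m i)) : V S → ℤ
  | .inl ⟨i, j⟩ => if (j : ℕ) = (I i.1 : ℕ) then 1 else 0
  | .inr _ => 0

/-- The reflection `s_𝐢`. -/
def sJ (S : Setup) (I : ∀ i : Fin (S.p+1), Fin (S.m i)) (β : V S → ℤ) : V S → ℤ :=
  fun b => β b - bform S β (epsJ S I) * epsJ S I b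

/-- The quasi-fundamental set `F̃`. -/
def quasiFund (S : Setup) (β : V S → ℤ) : Prop :=
  inL S β ∧ (∀ a, 0 ≤ β a) ∧ β ≠ 0 ∧
  (∀ I : ∀ i : Fin (S.p+1), Fin (S.m i), bform S β (epsJ S I) ≤ 0) ∧
  (∀ (i : Fin (S.p+1)) (j : Fin (S.m i)) (κ : Fin (S.e i j - 1)),
      bform S β (eps S (Sum.inr ⟨i, j, κ⟩)) ≤ 0) ∧
  connSupp S β

/-- `μ_𝐢 = Σ_{i ∈ I_irr} μ_{[i,j_i]}`. -/
noncomputable def muJ (S : Setup) (I : ∀ i : Fin (S.p+1), Fin (S.m i)) (μ : V S → ℂ) : ℂ :=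
  ∑ i : {i : Fin (S.p+1) // Iirr S i}, μ (vI S i (I i.1))

/-- The transformed parameter `μ'` in the move `s_𝐢` on pairs. -/
noncomputable def muMove (S : Setup) (I : ∀ i : Fin (S.p+1), Fin (S.m i)) (μ : V S → ℂ) :
    V S → ℂ := fun a =>
  match a with
  | .inl ⟨i, j⟩ =>
      if i.1 = 0 ∧ (j : ℕ) = (I 0 : ℕ) then μ a - 2 * muJ S I μ else μ a
  | .inr ⟨i, j, κ⟩ =>
      if j = I i ∧ (κ : ℕ) = 0 then μ a + muJ S I μ else μ a

/-- The reflected parameter `r_a(μ)` for a vertex `a`. -/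
noncomputable def rvtx (S : Setup) (a : V S) (μ : V S → ℂ) : V S → ℂ :=
  fun b => μ b - ((bform S (eps S a) (eps S b) : ℤ) : ℂ) * μ a

/-- One move generating the relation `∼` on pairs `(β,μ)`. -/
def stepRel (S : Setup) :
    ((V S → ℤ) × (V S → ℂ)) → ((V S → ℤ) × (V S → ℂ)) → Prop := fun x y =>
  (∃ (i : Fin (S.p+1)) (j : Fin (S.m i)) (κ : Fin (S.e i j - 1)),
      x.2 (Sum.inr ⟨i, j, κ⟩) ≠ 0 ∧
      y = (refl1 S (Sum.inr ⟨i, j, κ⟩) x.1, rvtx S (Sum.inr ⟨i, j, κ⟩) x.2)) ∨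
  (∃ I : ∀ i : Fin (S.p+1), Fin (S.m i),
      muJ S I x.2 ≠ 0 ∧ y = (sJ S I x.1, muMove S I x.2))

/-- The smallest equivalence relation `∼` containing all the moves. -/
def pairEquiv (S : Setup) :
    ((V S → ℤ) × (V S → ℂ)) → ((V S → ℤ) × (V S → ℂ)) → Prop :=
  Relation.EqvGen (stepRel S)

/-- The vector `z^{(i₀)}` for `i₀ ∈ I_irr ∖ {0}`. -/
def zvec (S : Setup) (i' : Fin (S.p+1)) : V S → ℂ
  | .inl ⟨i, _⟩ => if i.1 = i' then 1 else if i.1 = 0 then -1 else 0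
  | .inr _ => 0

theorem leg_const (N : ℕ) : ∀ F : ℕ → ℤ, F N = 0 →
    ∑ k ∈ Finset.range N, (F k - F (k+1))^2 ≤ 0 → ∀ k ≤ N, F k = 0 := by
  induction N with
  | zero => intro F h _ k hk; obtain rfl : k = 0 := by omega
            exact h
  | succ N ih =>
    intro F h hs k hk
    rw [Finset.sum_range_succ] at hs
    have h1 : 0 ≤ ∑ k ∈ Finset.range N, (F k - F (k+1))^2 :=
      Finset.sum_nonneg fun _ _ => sq_nonneg _
    have h2 := sq_nonneg (F N - F (N+1))
    have h3 : F N = 0 := by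
      have : (F N - F (N+1))^2 = 0 := by linarith
      have := pow_eq_zero_iff (two_ne_zero) |>.1 this
      omega
    rcases Nat.lt_or_ge N k with hk' | hk'
    · obtain rfl : k = N+1 := by omega
      exact h
    · exact ih F h3 (by linarith) k hk'

theorem leg_one (N : ℕ) : ∀ F : ℕ → ℤ, F N = 0 → F 0 = 1 →
    ∑ k ∈ Finset.range N, (F k - F (k+1))^2 ≤ 1 →
    ∃ l, 1 ≤ l ∧ l ≤ N ∧ ∀ k < N, F k = if k < l then 1 else 0 := by
  induction N with
  | zero => intro F h h0; omega
  | succ N ih =>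
    intro F h h0 hs
    rw [Finset.sum_range_succ'] at hs
    have hn : 0 ≤ ∑ k ∈ Finset.range N, (F (k+1) - F (k+1+1))^2 :=
      Finset.sum_nonneg fun _ _ => sq_nonneg _
    by_cases h1 : F 1 = 1
    · have hsq := sq_nonneg (F 0 - F (0+1))
      obtain ⟨l, hl1, hl2, hl⟩ := ih (fun k => F (k+1)) h h1 (by simpa using by linarith)
      refine ⟨l+1, by omega, by omega, ?_⟩
      rintro (_ | k) hk
      · simp [h0]
      · simpa using hl k (by omega)
    · have hsq : 1 ≤ (F 0 - F (0+1))^2 := by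
        have : F 0 - F (0+1) ≠ 0 := by simp only [zero_add]; omega
        have := sq_pos_of_ne_zero this
        omega
      have := leg_const N (fun k => F (k+1)) h (by simpa using by linarith)
      refine ⟨1, by omega, by omega, ?_⟩
      rintro (_ | k) hk
      · simp [h0]
      · simpa using this k (by omega)

/-- quadratic form of a leg -/
def legq (N : ℕ) (f : Fin N → ℤ) : ℤ :=
  ∑ k : Fin N, f k * f k - ∑ k : Fin N, ∑ k' : Fin N,
    (if (k : ℕ) = (k' : ℕ) + 1 then 1 else 0) * f k * f k'

def ext0 (N : ℕ) (f : Fin N → ℤ) (k : ℕ) : ℤ := if h : k < N then f ⟨k, h⟩ else 0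

theorem two_legq (N : ℕ) (f : Fin N → ℤ) :
    2 * legq N f = (ext0 N f 0)^2 +
      ∑ k ∈ Finset.range N, (ext0 N f k - ext0 N f (k+1))^2 := by
  have hf : ∀ k : Fin N, f k = ext0 N f k := by intro k; simp [ext0]
  have hN : ext0 N f N = 0 := by simp [ext0]
  have h1 : ∑ k : Fin N, ∑ k' : Fin N,
      (if (k : ℕ) = (k' : ℕ) + 1 then 1 else 0) * f k * f k' =
      ∑ k ∈ Finset.range N, ext0 N f (k+1) * ext0 N f k := by
    rw [Finset.sum_comm, ← Fin.sum_univ_eq_sum_range (fun k => ext0 N f (k+1) * ext0 N f k)]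
    refine Finset.sum_congr rfl fun k' _ => ?_
    by_cases h : (k' : ℕ) + 1 < N
    · rw [Finset.sum_eq_single ⟨k'+1, h⟩]
      · simp [hf]
      · intro b _ hb
        have : (b : ℕ) ≠ k' + 1 := fun h' => hb (Fin.ext h')
        simp [this]
      · simp
    · have h2 : ext0 N f (k'+1) = 0 := by simp [ext0, h]
      rw [h2, zero_mul]
      refine Finset.sum_eq_zero fun b _ => ?_
      have : (b : ℕ) ≠ k' + 1 := by omega
      simp [this]
  have h2 : ∑ k : Fin N, f k * f k = ∑ k ∈ Finset.range N, ext0 N f k * ext0 N f k := by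
    rw [← Fin.sum_univ_eq_sum_range (fun k => ext0 N f k * ext0 N f k)]
    exact Finset.sum_congr rfl fun k' _ => by rw [hf]
  have h3 := Finset.sum_range_succ (fun k => (ext0 N f k)^2) N
  rw [Finset.sum_range_succ'] at h3
  have h4 : ∑ k ∈ Finset.range N, (ext0 N f k - ext0 N f (k+1))^2 =
      ∑ k ∈ Finset.range N, ext0 N f k * ext0 N f k + ∑ k ∈ Finset.range N, (ext0 N f (k+1))^2
      - 2 * ∑ k ∈ Finset.range N, ext0 N f (k+1) * ext0 N f k := by
    rw [Finset.mul_sum, ← Finset.sum_add_distrib, ← Finset.sum_sub_distrib]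
    exact Finset.sum_congr rfl fun k _ => by ring
  have h5 : ∑ k ∈ Finset.range N, (ext0 N f k)^2 =
      ∑ k ∈ Finset.range N, ext0 N f k * ext0 N f k :=
    Finset.sum_congr rfl fun k _ => by ring
  rw [legq, h1, h2, h4]
  rw [h5, hN] at h3
  linarith

theorem legq_nonneg (N : ℕ) (f : Fin N → ℤ) : 0 ≤ legq N f := by
  have h := two_legq N f
  have := sq_nonneg (ext0 N f 0)
  have h1 : 0 ≤ ∑ k ∈ Finset.range N, (ext0 N f k - ext0 N f (k+1))^2 :=
      Finset.sum_nonneg fun _ _ => sq_nonneg _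
  linarith

theorem legq_zero (N : ℕ) (f : Fin N → ℤ) (hq : legq N f ≤ 0) (k : Fin N) : f k = 0 := by
  have h := two_legq N f
  have := sq_nonneg (ext0 N f 0)
  have := leg_const N (ext0 N f) (by simp [ext0]) (by linarith) k k.2.le
  simpa [ext0] using this

theorem legq_one (N : ℕ) (f : Fin N → ℤ) (hq : legq N f ≤ 1) (k0 : Fin N) (hk0 : (k0 : ℕ) = 0)
    (hp : 0 < f k0) :
    ∃ l, 1 ≤ l ∧ l ≤ N ∧ ∀ k : Fin N, f k = if (k : ℕ) < l then 1 else 0 := by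
  have h := two_legq N f
  have hf0 : f k0 = ext0 N f 0 := by
    have : 0 < N := hk0 ▸ k0.2
    obtain rfl : k0 = ⟨0, this⟩ := Fin.ext hk0
    simp [ext0, this]
  have h1 : 0 ≤ ∑ k ∈ Finset.range N, (ext0 N f k - ext0 N f (k+1))^2 :=
      Finset.sum_nonneg fun _ _ => sq_nonneg _
  have h01 : ext0 N f 0 = 1 := by nlinarith
  obtain ⟨l, a, b, c⟩ := leg_one N (ext0 N f) (by simp [ext0]) h01 (by rw [h01] at h; linarith)
  refine ⟨l, a, b, fun k => ?_⟩
  rw [← c k k.2]; simp [ext0]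

/-! bilinearity -/

theorem eform_add_left (S : Setup) (a b c : V S → ℤ) :
    eform S (a + b) c = eform S a c + eform S b c := by
  simp only [eform, Pi.add_apply, add_mul, mul_add, Finset.sum_add_distrib]; ring

theorem eform_add_right (S : Setup) (a b c : V S → ℤ) :
    eform S a (b + c) = eform S a b + eform S a c := by
  simp only [eform, Pi.add_apply, mul_add, Finset.sum_add_distrib]; ring

theorem eform_smul_left (S : Setup) (t : ℤ) (a c : V S → ℤ) :
    eform S (t • a) c = t * eform S a c := by
  simp only [eform, Pi.smul_apply, smul_eq_mul, mul_sub, Finset.mul_sum]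
  congr 1
  · exact Finset.sum_congr rfl fun _ _ => by ring
  · exact Finset.sum_congr rfl fun _ _ => Finset.sum_congr rfl fun _ _ => by ring

theorem eform_smul_right (S : Setup) (t : ℤ) (a c : V S → ℤ) :
    eform S a (t • c) = t * eform S a c := by
  simp only [eform, Pi.smul_apply, smul_eq_mul, mul_sub, Finset.mul_sum]
  congr 1
  · exact Finset.sum_congr rfl fun _ _ => by ring
  · exact Finset.sum_congr rfl fun _ _ => Finset.sum_congr rfl fun _ _ => by ring

theorem qform_refl_gen (S : Setup) (β v : V S → ℤ) (hv : eform S v v = 1) :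
    qform S (β + (-bform S β v) • v) = qform S β := by
  simp only [qform, eform_add_left, eform_add_right, eform_smul_left, eform_smul_right, hv, bform]
  ring

theorem arr_self (S : Setup) (a : V S) : arr S a a = 0 := by
  rcases a with ⟨i, j⟩ | ⟨i, j, k⟩ <;> simp [arr]

theorem eform_eps (S : Setup) (a : V S) : eform S (eps S a) (eps S a) = 1 := by
  simp [eform, eps, arr_self]

theorem qform_refl1 (S : Setup) (a : V S) (β : V S → ℤ) :
    qform S (refl1 S a β) = qform S β := by
  rw [← qform_refl_gen S β (eps S a) (eform_eps S a)]
  congr 1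
  funext b
  simp [refl1]; ring

theorem qform_reflList (S : Setup) (l : List (V S)) (β : V S → ℤ) :
    qform S (reflList S l β) = qform S β := by
  induction l with
  | nil => rfl
  | cons a l ih =>
    rw [← ih]; exact qform_refl1 S a _

theorem eform_sum_eps (S : Setup) (β γ : V S → ℤ) :
    ∑ a, γ a * bform S β (eps S a) = bform S β γ := by
  have h1 : ∀ a, bform S β (eps S a) =
      2 * β a - ∑ b, (arr S b a : ℤ) * β b - ∑ b, (arr S a b : ℤ) * β b := by
    intro a
    simp [bform, eform, eps]
    ring
  simp only [h1, mul_sub, Finset.sum_sub_distrib, Finset.mul_sum]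
  simp only [bform, eform]
  have h2 : ∑ a, γ a * (2 * β a) = ∑ a, β a * γ a + ∑ a, γ a * β a := by
    rw [← Finset.sum_add_distrib]; exact Finset.sum_congr rfl fun _ _ => by ring
  have h3 : ∑ a, ∑ b, γ a * ((arr S b a : ℤ) * β b) = ∑ a, ∑ b, (arr S a b : ℤ) * β a * γ b := by
    rw [Finset.sum_comm]
    exact Finset.sum_congr rfl fun _ _ => Finset.sum_congr rfl fun _ _ => by ring
  have h4 : ∑ a, ∑ b, γ a * ((arr S a b : ℤ) * β b) = ∑ a, ∑ b, (arr S a b : ℤ) * γ a * β b :=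
    Finset.sum_congr rfl fun _ _ => Finset.sum_congr rfl fun _ _ => by ring
  rw [h2, h3, h4]; ring

theorem qform_fund (S : Setup) (γ : V S → ℤ) (h : fund S γ) : qform S γ ≤ 0 := by
  have h1 := eform_sum_eps S γ γ
  have h2 : ∑ a, γ a * bform S γ (eps S a) ≤ 0 :=
    Finset.sum_nonpos fun a _ => mul_nonpos_of_nonneg_of_nonpos (h.2.1 a) (h.2.2.2 a)
  simp only [bform] at h1
  simp only [bform] at h2
  unfold qform
  linarith

theorem qform_imag (S : Setup) (β : V S → ℤ) (h : isImagRoot S β) : qform S β ≤ 0 := by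
  obtain ⟨l, γ, h, rfl⟩ := h
  rw [qform_reflList]
  rcases h with h | h
  · exact qform_fund S γ h
  · have h1 := qform_fund S _ h
    have h2 : -γ = (-1 : ℤ) • γ := by simp
    rw [h2, qform, eform_smul_left, eform_smul_right] at h1
    unfold qform; linarith

theorem qform_real (S : Setup) (β : V S → ℤ) (h : isRealRoot S β) : qform S β = 1 := by
  obtain ⟨l, a, rfl⟩ := h
  rw [qform_reflList]; exact eform_eps S a

theorem qform_root (S : Setup) (β : V S → ℤ) (h : isRoot S β) : qform S β ≤ 1 := by
  rcases h with h | h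
  · exact (qform_real S β h).le
  · have := qform_imag S β h; omega

/-! the vector ε_I -/

theorem sum_epsJ (S : Setup) (I : ∀ i : Fin (S.p+1), Fin (S.m i)) (h : V S → ℤ) :
    ∑ a, h a * epsJ S I a = ∑ i : {i : Fin (S.p+1) // Iirr S i}, h (vI S i (I i.1)) := by
  rw [Fintype.sum_sum_type]
  simp only [epsJ, mul_zero, Finset.sum_const_zero, add_zero]
  rw [Fintype.sum_sigma]
  refine Finset.sum_congr rfl fun i _ => ?_
  simp [epsJ, vI, ← Fin.ext_iff]

theorem eform_epsJ_right (S : Setup) (I : ∀ i : Fin (S.p+1), Fin (S.m i)) (γ : V S → ℤ) :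
    eform S γ (epsJ S I) = ∑ i : {i : Fin (S.p+1) // Iirr S i}, γ (vI S i (I i.1)) -
      ∑ a, γ a * ∑ i : {i : Fin (S.p+1) // Iirr S i}, (arr S a (vI S i (I i.1)) : ℤ) := by
  rw [eform, sum_epsJ]
  congr 1
  refine Finset.sum_congr rfl fun a _ => ?_
  rw [sum_epsJ S I (fun b => (arr S a b : ℤ) * γ a), Finset.mul_sum]
  exact Finset.sum_congr rfl fun _ _ => by ring

theorem eform_epsJ (S : Setup) (I : ∀ i : Fin (S.p+1), Fin (S.m i)) :
    eform S (epsJ S I) (epsJ S I) = 1 := by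
  rw [eform_epsJ_right]
  have h : ∑ a, epsJ S I a * ∑ i : {i : Fin (S.p+1) // Iirr S i}, (arr S a (vI S i (I i.1)) : ℤ)
    = ∑ i' : {i : Fin (S.p+1) // Iirr S i}, ∑ i : {i : Fin (S.p+1) // Iirr S i},
      (arr S (vI S i' (I i'.1)) (vI S i (I i.1)) : ℤ) := by
    rw [← sum_epsJ S I (fun a => ∑ i : {i : Fin (S.p+1) // Iirr S i},
      (arr S a (vI S i (I i.1)) : ℤ))]
    exact Finset.sum_congr rfl fun _ _ => by ring
  have h2 : ∀ i' i : {i : Fin (S.p+1) // Iirr S i},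
      (arr S (vI S i' (I i'.1)) (vI S i (I i.1)) : ℤ) =
        if i' = i0 S then (if i = i0 S then 0 else 1) else 0 := by
    intro i' i
    have e1 : i'.1 = 0 ↔ i' = i0 S := by simp [i0, Subtype.ext_iff]
    have e2 : i.1 = 0 ↔ i = i0 S := by simp [i0, Subtype.ext_iff]
    have e3 : ∀ h : i' = i, ¬ ((I i'.1 : ℕ) < (I i.1 : ℕ)) := by rintro rfl; simp
    simp only [arr, vI, e1, e2, ne_eq]
    by_cases h : i' = i
    · subst h
      simp only [lt_irrefl, if_false, dif_pos]
      by_cases h1 : i' = i0 S <;> simp [h1]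
    · by_cases h1 : i' = i0 S <;> by_cases h2 : i = i0 S <;> simp [h, h1, h2, i0] <;> simp_all [i0]
  rw [h]
  simp only [h2]
  have h5 : (∑ x : {i : Fin (S.p+1) // Iirr S i}, ∑ y : {i : Fin (S.p+1) // Iirr S i},
      if x = i0 S then (if y = i0 S then (0:ℤ) else 1) else 0) =
      ∑ y : {i : Fin (S.p+1) // Iirr S i}, if y = i0 S then (0:ℤ) else 1 := by
    rw [Finset.sum_eq_single (i0 S)]
    · simp only [if_true]
    · intro b _ hb
      simp [hb]
    · intro hb
      exact absurd (Finset.mem_univ _) hb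
  rw [h5]
  simp only [vI, epsJ]
  rw [← Finset.sum_erase_add _ _ (Finset.mem_univ (i0 S)),
    ← Finset.sum_erase_add _ _ (Finset.mem_univ (i0 S))]
  have h3 : ∑ x ∈ Finset.univ.erase (i0 S), (if x = i0 S then (0:ℤ) else 1)
      = ∑ x ∈ Finset.univ.erase (i0 S), 1 :=
    Finset.sum_congr rfl fun x hx => by simp [Finset.ne_of_mem_erase hx]
  simp [h3]

/-- leg part -/
def legpart (S : Setup) (β : V S → ℤ) : V S → ℤ
  | .inl _ => 0
  | .inr x => β (.inr x)

theorem arr_sum_leg (S : Setup) (I : ∀ i : Fin (S.p+1), Fin (S.m i)) (i : Fin (S.p+1))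
    (j : Fin (S.m i)) (κ : Fin (S.e i j - 1)) :
    ∑ i' : {i : Fin (S.p+1) // Iirr S i}, (arr S (Sum.inr ⟨i, j, κ⟩) (vI S i' (I i'.1)) : ℤ) =
      if j = I i ∧ (κ : ℕ) = 0 then 1 else 0 := by
  simp only [arr, vI]
  by_cases hi : Iirr S i
  · rw [Finset.sum_eq_single ⟨i, hi⟩]
    · simp [hi, ← Fin.ext_iff]
    · intro b _ hb
      have : i ≠ b.1 := fun h => hb (Subtype.ext h.symm)
      simp [this, hi]
    · simp
  · have hm : S.m i = 1 := by
      have := S.hm i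
      simp only [Iirr, not_or] at hi; omega
    have hj : j = I i := Fin.ext (by omega)
    have hj0 : (j : ℕ) = 0 := by omega
    rw [Finset.sum_eq_single (i0 S)]
    · have : i ≠ (i0 S).1 := fun h => hi (h ▸ (i0 S).2)
      rw [if_neg (fun h => this h.1)]
      simp [hi, ← hj, hj0, i0]
    · intro b _ hb
      have h1 : i ≠ b.1 := fun h => hi (h ▸ b.2)
      have h2 : b.1 ≠ 0 := fun h => hb (Subtype.ext h)
      simp [h1, h2]
    · simp

theorem bform_leg (S : Setup) (I : ∀ i : Fin (S.p+1), Fin (S.m i)) (β : V S → ℤ) :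
    bform S (legpart S β) (epsJ S I) =
      - ∑ x : Vr S, β (.inr x) * if x.2.1 = I x.1 ∧ (x.2.2 : ℕ) = 0 then 1 else 0 := by
  have h1 : eform S (epsJ S I) (legpart S β) = 0 := by
    simp [eform, Fintype.sum_sum_type, legpart, epsJ, arr]
  rw [bform, h1, eform_epsJ_right, Fintype.sum_sum_type]
  simp only [legpart, vI, Finset.sum_const_zero, zero_mul, zero_add, zero_sub, add_zero]
  congr 1
  refine Finset.sum_congr rfl fun x _ => ?_
  obtain ⟨i, j, κ⟩ := x
  congr 1
  exact arr_sum_leg S I i j κ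

theorem qform_leg (S : Setup) (β : V S → ℤ) :
    qform S (legpart S β) = ∑ y : (Σ i : Fin (S.p+1), Fin (S.m i)),
      legq (S.e y.1 y.2 - 1) (fun κ => β (.inr ⟨y.1, y.2, κ⟩)) := by
  simp only [qform, eform, Fintype.sum_sum_type, legpart, zero_mul, mul_zero,
    Finset.sum_const_zero, zero_add, legq]
  simp only [Fintype.sum_sigma, ← Finset.sum_sub_distrib]
  refine Finset.sum_congr rfl fun i _ => Finset.sum_congr rfl fun j _ =>
    Finset.sum_congr rfl fun κ _ => ?_
  congr 1
  rw [Finset.sum_eq_single i, Finset.sum_eq_single j]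
  · refine Finset.sum_congr rfl fun κ' _ => ?_
    simp [arr]
  · intro b _ hb
    have : (j : ℕ) ≠ b := fun h => hb (Fin.ext h.symm)
    simp [arr, this]
  · simp
  · intro b _ hb
    simp [arr, Ne.symm hb]
  · simp

theorem main_core (S : Setup) (β : V S → ℤ) (hroot : isRoot S β) (hnn : ∀ a, 0 ≤ β a)
    (I : ∀ i : Fin (S.p+1), Fin (S.m i)) (hc : 0 < bform S β (epsJ S I))
    (hdec : β = bform S β (epsJ S I) • epsJ S I + legpart S β) :
    ∃ (i₀ : Fin (S.p+1)) (l : ℕ), 1 ≤ l ∧ l ≤ S.e i₀ (I i₀) - 1 ∧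
        (β = epsJ S I + ∑ κ : Fin (S.e i₀ (I i₀) - 1),
              (if (κ : ℕ) < l then eps S (Sum.inr ⟨i₀, I i₀, κ⟩) else 0)) ∧
        isRealRoot S β := by
  set c := bform S β (epsJ S I) with hcdef
  have hJ := eform_epsJ S I
  have hb : bform S (legpart S β) (epsJ S I) = -c := by
    have : c = bform S (c • epsJ S I + legpart S β) (epsJ S I) := by rw [← hdec]
    simp only [bform, eform_add_left, eform_add_right, eform_smul_left, eform_smul_right, hJ] at this
    simp only [bform]; linarith
  have hq : qform S β = qform S (legpart S β) := by
    conv_lhs => rw [hdec]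
    simp only [qform, eform_add_left, eform_add_right, eform_smul_left, eform_smul_right, hJ]
    simp only [bform] at hb
    linear_combination c * hb
  have hle := qform_root S β hroot
  rw [hq, qform_leg] at hle
  have hbl := bform_leg S I β
  rw [hb, neg_inj] at hbl
  obtain ⟨⟨i₀, j, κ₀⟩, -, hx⟩ : ∃ x ∈ Finset.univ, β (Sum.inr x) *
      (if x.2.1 = I x.1 ∧ (x.2.2 : ℕ) = 0 then 1 else 0) ≠ 0 :=
    Finset.exists_ne_zero_of_sum_ne_zero (by rw [← hbl]; exact hc.ne')
  simp only [ne_eq, mul_eq_zero, not_or, ite_eq_right_iff, one_ne_zero, imp_false, not_not] at hx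
  obtain ⟨hx0, rfl, hκ0⟩ := hx
  have hx1 : 0 < β (Sum.inr ⟨i₀, I i₀, κ₀⟩) := lt_of_le_of_ne (hnn _) (Ne.symm hx0)
  set f : (Σ i : Fin (S.p+1), Fin (S.m i)) → ℤ := fun y =>
      legq (S.e y.1 y.2 - 1) (fun κ => β (.inr ⟨y.1, y.2, κ⟩)) with hf
  have hfn : ∀ y, 0 ≤ f y := fun y => legq_nonneg _ _
  have hf1 : 1 ≤ f ⟨i₀, I i₀⟩ := by
    by_contra h
    exact hx0 (legq_zero _ (fun κ => β (.inr ⟨i₀, I i₀, κ⟩))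
      (show f ⟨i₀, I i₀⟩ ≤ 0 by omega) κ₀)
  rw [← Finset.add_sum_erase _ _ (Finset.mem_univ (⟨i₀, I i₀⟩ : Σ i : Fin (S.p+1), Fin (S.m i)))]
    at hle
  have hse : 0 ≤ ∑ y ∈ Finset.univ.erase (⟨i₀, I i₀⟩ : Σ i : Fin (S.p+1), Fin (S.m i)), f y :=
    Finset.sum_nonneg fun y _ => hfn y
  have hother : ∀ y, y ≠ (⟨i₀, I i₀⟩ : Σ i : Fin (S.p+1), Fin (S.m i)) →
      ∀ κ, β (.inr ⟨y.1, y.2, κ⟩) = 0 := by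
    intro y hy κ
    have h1 : f y ≤ ∑ y ∈ Finset.univ.erase (⟨i₀, I i₀⟩ : Σ i : Fin (S.p+1), Fin (S.m i)), f y :=
      Finset.single_le_sum (f := f) (fun y _ => hfn y) (Finset.mem_erase.2 ⟨hy, Finset.mem_univ _⟩)
    exact legq_zero _ (fun κ => β (.inr ⟨y.1, y.2, κ⟩))
      (show f y ≤ 0 by linarith) κ
  obtain ⟨l, hl1, hl2, hl⟩ := legq_one _ (fun κ => β (.inr ⟨i₀, I i₀, κ⟩))
      (show f ⟨i₀, I i₀⟩ ≤ 1 by linarith) κ₀ hκ0 hx1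
  have hc1 : c = 1 := by
    rw [hbl, Finset.sum_eq_single ⟨i₀, I i₀, κ₀⟩]
    · have := hl κ₀
      simp only [hκ0] at this
      simp [hκ0, this, show 0 < l from hl1]
    · rintro ⟨i, j, κ⟩ _ hne
      by_cases hy : (⟨i, j⟩ : Σ i : Fin (S.p+1), Fin (S.m i)) = ⟨i₀, I i₀⟩
      · obtain ⟨rfl, h⟩ := Sigma.mk.inj_iff.1 hy
        obtain rfl := eq_of_heq h
        have : (κ : ℕ) ≠ 0 := fun h => hne (by
          have : κ = κ₀ := Fin.ext (by omega)
          rw [this])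
        simp [this]
      · rw [hother ⟨i, j⟩ hy κ, zero_mul]
    · simp
  refine ⟨i₀, l, hl1, hl2, ?_, ?_⟩
  · rw [hc1, one_smul] at hdec
    conv_lhs => rw [hdec]
    congr 1
    funext a
    rw [Finset.sum_apply]
    rcases a with a | ⟨i, j, κ⟩
    · rw [Finset.sum_eq_zero]
      · rfl
      · intro κ _
        split_ifs <;> simp [eps]
    · by_cases hy : (⟨i, j⟩ : Σ i : Fin (S.p+1), Fin (S.m i)) = ⟨i₀, I i₀⟩
      · obtain ⟨rfl, h⟩ := Sigma.mk.inj_iff.1 hy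
        obtain rfl := eq_of_heq h
        rw [Finset.sum_eq_single κ]
        · have := hl κ
          simp only [legpart]
          rw [show β (Sum.inr ⟨i, I i, κ⟩) = if (κ : ℕ) < l then 1 else 0 from this]
          split_ifs <;> simp [eps]
        · intro b _ hb
          split_ifs <;> simp [eps, Ne.symm hb]
        · simp
      · rw [Finset.sum_eq_zero]
        · exact hother ⟨i, j⟩ hy κ
        · intro κ' _
          split_ifs
          · simp only [eps]
            rw [if_neg]
            intro h
            apply hy
            have h := Sum.inr_injective h
            have h' := congrArg (fun x : Vr S => (⟨x.1, x.2.1⟩ : Σ i : Fin (S.p+1), Fin (S.m i))) h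
            exact h'
          · rfl
  · rcases hroot with h | h
    · exact h
    · have := qform_imag S β h
      rw [hq, qform_leg, ← Finset.add_sum_erase _ _
        (Finset.mem_univ (⟨i₀, I i₀⟩ : Σ i : Fin (S.p+1), Fin (S.m i)))] at this
      exfalso
      have h2 : f ⟨i₀, I i₀⟩ + ∑ y ∈ Finset.univ.erase
        (⟨i₀, I i₀⟩ : Σ i : Fin (S.p+1), Fin (S.m i)), f y ≤ 0 := this
      linarith

/-- Let `β ∈ R̃⁺` with `Σ_j β_[i,j] > 0` for every `i ∈ I_irr`, and suppose some
reflection `s_a` (for `a ∈ 𝒥 ∪ {[i,j,k]-vertices}`) kills all the block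
coordinates of `β`. Then `a` is some `𝐢 ∈ 𝒥` and
`β = ε_𝐢 + ε_{[i₀,j_{i₀},1]} + ⋯ + ε_{[i₀,j_{i₀},l]}` for some `i₀` and
`1 ≤ l ≤ e[i₀,j_{i₀}] - 1`; in particular `β` is a real root of `Q`. -/
theorem statement14 (S : Setup) (β : V S → ℤ)
    (hβ : isPosRoot S β ∧ inL S β)
    (hpos : ∀ i : {i : Fin (S.p+1) // Iirr S i}, 0 < ∑ j : Fin (S.m i.1), β (vI S i j))
    (hkill :
      (∃ I : ∀ i : Fin (S.p+1), Fin (S.m i),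
        ∀ (i : {i : Fin (S.p+1) // Iirr S i}) (j : Fin (S.m i.1)),
          sJ S I β (vI S i j) = 0) ∨
      (∃ (i : Fin (S.p+1)) (j : Fin (S.m i)) (κ : Fin (S.e i j - 1)),
        ∀ (i' : {i : Fin (S.p+1) // Iirr S i}) (j' : Fin (S.m i'.1)),
          refl1 S (Sum.inr ⟨i, j, κ⟩) β (vI S i' j') = 0)) :
    ∃ I : ∀ i : Fin (S.p+1), Fin (S.m i),
      (∀ (i : {i : Fin (S.p+1) // Iirr S i}) (j : Fin (S.m i.1)),
        sJ S I β (vI S i j) = 0) ∧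
      ∃ (i₀ : Fin (S.p+1)) (l : ℕ), 1 ≤ l ∧ l ≤ S.e i₀ (I i₀) - 1 ∧
        (β = epsJ S I + ∑ κ : Fin (S.e i₀ (I i₀) - 1),
              (if (κ : ℕ) < l then eps S (Sum.inr ⟨i₀, I i₀, κ⟩) else 0)) ∧
        isRealRoot S β := by
  obtain ⟨⟨hroot, hnn⟩, -⟩ := hβ
  rcases hkill with ⟨I, hI⟩ | ⟨i, j, κ, h⟩
  · refine ⟨I, hI, ?_⟩
    have hin : ∀ (i : {i : Fin (S.p+1) // Iirr S i}) (j : Fin (S.m i.1)),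
        β (Sum.inl ⟨i, j⟩) = bform S β (epsJ S I) * epsJ S I (Sum.inl ⟨i, j⟩) := by
      intro i j
      have := hI i j
      simp only [sJ, vI] at this
      linarith
    apply main_core S β hroot hnn I
    · have h0 := hpos (i0 S)
      have h1 : ∑ j : Fin (S.m (i0 S).1), β (vI S (i0 S) j) = bform S β (epsJ S I) := by
        simp only [vI, hin, epsJ]
        simp [← Fin.ext_iff]
      rwa [h1] at h0
    · funext a
      rcases a with ⟨i, j⟩ | x
      · simp [legpart, hin i j]
      · simp [legpart, epsJ]
  · exfalso
    have h0 := hpos (i0 S)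
    rw [Finset.sum_eq_zero] at h0
    · exact lt_irrefl _ h0
    · intro j' _
      have := h (i0 S) j'
      simpa [refl1, vI, eps] using this


end

end DS
end

section
/- Fix (β,μ) ∈ S. Then there exist complex numbers γ_i for i ∈ I_irr ∖ {0} such that μ′ = μ + Σ_{i∈I_irr∖{0}} γ_i z^(i) has the following property: every β′ ∈ (ℤ_{≥0})^{Q_0} with β′ ≤ β coordinatewise and β′·μ′ = 0 lies in L. -/
open Polynomial Matrix BigOperators

namespace DS

noncomputable section

/-- The pairing of `β` with `z⁽ⁱ⁾` measures the defect of the `i`-th condition of `L`. -/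
lemma dotC_zvec (S : Setup) (β : V S → ℤ) (i : {i : Fin (S.p+1) // Iirr S i}) (hi : i.1 ≠ 0) :
    dotC S β (zvec S i.1) =
      (((∑ j : Fin (S.m i.1), β (vI S i j)) - ∑ j : Fin (S.m 0), β (v0 S j) : ℤ) : ℂ) := by
  have h0 : i ≠ i0 S := fun h => hi (by rw [h]; rfl)
  have key : ∀ x : {i : Fin (S.p+1) // Iirr S i},
      (∑ j : Fin (S.m x.1), (β (Sum.inl ⟨x, j⟩) : ℂ) * zvec S i.1 (Sum.inl ⟨x, j⟩)) =
        (if x = i then ∑ j : Fin (S.m x.1), (β (Sum.inl ⟨x, j⟩) : ℂ) else 0) -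
        (if x = i0 S then ∑ j : Fin (S.m x.1), (β (Sum.inl ⟨x, j⟩) : ℂ) else 0) := by
    intro x
    by_cases h1 : x = i
    · subst h1
      simp [zvec, h0]
    · have h1' : x.1 ≠ i.1 := fun h => h1 (Subtype.ext h)
      by_cases h2 : x = i0 S
      · subst h2
        have h3 : (i0 S).1 = 0 := rfl
        simp [zvec, h1, hi.symm, h3]
      · have h2' : x.1 ≠ 0 := fun h => h2 (Subtype.ext h)
        simp [zvec, h1, h1', h2, h2']
  have hr : ∀ x : Vr S, (β (Sum.inr x) : ℂ) * zvec S i.1 (Sum.inr x) = 0 := by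
    intro x
    simp [zvec]
  unfold dotC
  rw [Fintype.sum_sum_type, Fintype.sum_sigma]
  simp only [key, hr]
  rw [Finset.sum_sub_distrib, Finset.sum_ite_eq' , Finset.sum_ite_eq']
  simp only [Finset.mem_univ, if_true, Finset.sum_const_zero, add_zero]
  push_cast
  rfl

/-- The polynomial in `t` obtained from `β · μ'` by putting `γ_i = t ^ i`. -/
def tpoly (S : Setup) (μ : V S → ℂ) (β : V S → ℤ) : Polynomial ℂ :=
  Polynomial.C (dotC S β μ) +
    ∑ i ∈ Finset.univ.filter (fun i : Fin (S.p+1) => Iirr S i ∧ i ≠ 0),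
      Polynomial.C (dotC S β (zvec S i)) * Polynomial.X ^ (i : ℕ)

lemma tpoly_eval (S : Setup) (μ : V S → ℂ) (β : V S → ℤ) (t : ℂ) :
    (tpoly S μ β).eval t = dotC S β (fun a => μ a +
            ∑ i ∈ Finset.univ.filter (fun i : Fin (S.p+1) => Iirr S i ∧ i ≠ 0),
              t ^ (i : ℕ) * zvec S i a) := by
  simp only [tpoly, Polynomial.eval_add, Polynomial.eval_C, Polynomial.eval_finsetSum,
    Polynomial.eval_mul, Polynomial.eval_pow, Polynomial.eval_X]
  unfold dotC
  simp only [mul_add, Finset.sum_add_distrib, Finset.mul_sum, Finset.sum_mul]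
  congr 1
  rw [Finset.sum_comm]
  refine Finset.sum_congr rfl fun a _ => Finset.sum_congr rfl fun i _ => ?_
  ring

lemma tpoly_ne_zero (S : Setup) (μ : V S → ℂ) (β : V S → ℤ) (h : ¬ inL S β) :
    tpoly S μ β ≠ 0 := by
  intro h0
  apply h
  intro i hi
  have hc := congrArg (fun P => Polynomial.coeff P (i.1 : ℕ)) h0
  have hiv : (i.1 : ℕ) ≠ 0 := fun h => hi (Fin.ext h)
  simp only [tpoly, Polynomial.coeff_add, Polynomial.coeff_C, hiv, if_false,
    Polynomial.finsetSum_coeff, Polynomial.coeff_C_mul_X_pow, Polynomial.coeff_zero,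
    zero_add] at hc
  rw [Finset.sum_eq_single i.1] at hc
  · rw [if_pos rfl, dotC_zvec S β i hi] at hc
    have := Int.cast_eq_zero.mp hc
    omega
  · intro b _ hb
    rw [if_neg]
    exact fun h => hb (Fin.ext h.symm)
  · intro hn
    exact absurd (Finset.mem_filter.mpr ⟨Finset.mem_univ _, i.2, hi⟩) hn

/-- Fix `(β,μ) ∈ 𝒮`. Then there exist `γ_i ∈ ℂ` (for `i ∈ I_irr ∖ {0}`) such that
`μ' = μ + Σ_i γ_i z⁽ⁱ⁾` satisfies: every `β' ≥ 0` with `β' ≤ β` coordinatewise and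
`β'·μ' = 0` lies in `L`. -/
theorem statement15 (S : Setup) (β : V S → ℤ) (μ : V S → ℂ)
    (hβ : inL S β) (hβμ : dotC S β μ = 0) :
    ∃ γ : Fin (S.p+1) → ℂ,
      ∀ β' : V S → ℤ, (∀ a, 0 ≤ β' a) → (∀ a, β' a ≤ β a) →
        dotC S β'
          (fun a => μ a +
            ∑ i ∈ Finset.univ.filter (fun i : Fin (S.p+1) => Iirr S i ∧ i ≠ 0),
              γ i * zvec S i a) = 0 →
        inL S β' := by
  have hcount : (⋃ b ∈ {b : V S → ℤ | ¬ inL S b},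
      {t : ℂ | (tpoly S μ b).IsRoot t}).Countable := by
    refine Set.Countable.biUnion (Set.to_countable _) fun b hb => ?_
    exact (Polynomial.finite_setOfPred_isRoot (tpoly_ne_zero S μ b hb)).countable
  obtain ⟨t, ht⟩ : ∃ t : ℂ, t ∉ ⋃ b ∈ {b : V S → ℤ | ¬ inL S b},
      {t : ℂ | (tpoly S μ b).IsRoot t} := by
    by_contra! hall
    exact not_countable_complex
      (hcount.mono fun x _ => hall x)
  refine ⟨fun i => t ^ (i : ℕ), fun β' _ _ hz => ?_⟩
  by_contra hL
  apply ht
  refine Set.mem_iUnion₂.mpr ⟨β', hL, ?_⟩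
  change (tpoly S μ β').eval t = 0
  rw [tpoly_eval]
  exact hz

end

end DS
end

section
/- The truncated orbit O_B equals the set of A_2x^{−2} + A_1x^{−1} ∈ 𝔤_2* for which there exists G ∈ GL(n,ℂ) with G^{−1}A_2G = B_irr and (G^{−1}A_1G)_{i,i} ∈ C_{R_i} for every i = 1,…,m. Moreover, if G_1, G_2 ∈ GL(n,ℂ) both satisfy G_t^{−1}A_2G_t = B_irr (t = 1,2), then G_2^{−1}G_1 = diag(h_1,…,h_m) with h_i ∈ GL(n_i,ℂ) for i = 1,…,m. -/
open Polynomial Matrix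

namespace DS2

noncomputable section

/-- Data for a degree-2 HTL normal form
`B = diag(α₁ I_{n₁} x⁻² + R₁ x⁻¹, …, α_m I_{n_m} x⁻² + R_m x⁻¹)` on `ℂⁿ`,
`n = n₁ + ⋯ + n_m`, with pairwise distinct `α_j`. -/
structure Setup2 where
  m : ℕ
  hm : 0 < m
  ns : Fin m → ℕ
  n : ℕ
  emb : (Σ j : Fin m, Fin (ns j)) ≃ Fin n
  al : Fin m → ℂ
  hal : Function.Injective al
  R : ∀ j : Fin m, Matrix (Fin (ns j)) (Fin (ns j)) ℂ

/-- An element `A₂ x⁻² + A₁ x⁻¹` of `𝔤₂*` is encoded as the polynomial matrix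
`A₂ + A₁ x` (degree < 2); the coadjoint `G₂`-action becomes conjugation mod `x²`. -/
abbrev PM (T : Setup2) := Matrix (Fin T.n) (Fin T.n) (Polynomial ℂ)

/-- The polynomial encoding of `A₂ x⁻² + A₁ x⁻¹`. -/
def polyOf (T : Setup2) (A1 A2 : Matrix (Fin T.n) (Fin T.n) ℂ) : PM T :=
  Matrix.of fun a b => Polynomial.C (A2 a b) + Polynomial.C (A1 a b) * Polynomial.X

/-- The HTL normal form `B`, in the polynomial encoding. -/
def Bmat2 (T : Setup2) : PM T :=
  Matrix.of fun a b =>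
    if h : (T.emb.symm a).1 = (T.emb.symm b).1 then
      (if Fin.cast (by rw [h]) (T.emb.symm a).2 = (T.emb.symm b).2 then
          Polynomial.C (T.al (T.emb.symm b).1)
        else 0)
        + Polynomial.C
            (T.R (T.emb.symm b).1 (Fin.cast (by rw [h]) (T.emb.symm a).2)
              (T.emb.symm b).2)
          * Polynomial.X
    else 0

/-- All entries have degree `< 2`, i.e. the matrix encodes an element of `𝔤₂*`. -/
def degLT2 (T : Setup2) (A : PM T) : Prop := ∀ a b, (A a b).degree < (2 : ℕ)

/-- Membership in the truncated orbit `𝒪_B`: conjugation modulo `x²` by an element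
of `G₂ = GL(n, ℂ[[x]]/x²)` (encoded by a polynomial matrix with invertible
constant term). -/
def inOrbit2 (T : Setup2) (A : PM T) : Prop :=
  degLT2 T A ∧
  ∃ g : PM T, IsUnit (g.map fun r => r.coeff 0) ∧
    ∀ a b, (Polynomial.X ^ 2 : Polynomial ℂ) ∣ (g * Bmat2 T - A * g) a b

/-- `B_irr = diag(α₁ I_{n₁}, …, α_m I_{n_m})`. -/
def Birr (T : Setup2) : Matrix (Fin T.n) (Fin T.n) ℂ :=
  Matrix.of fun a b => if a = b then T.al (T.emb.symm a).1 else 0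

/-- The `(j,j)`-block of a matrix with respect to `ℂⁿ = V₁ ⊕ ⋯ ⊕ V_m`. -/
def blockAt (T : Setup2) (j : Fin T.m) (M : Matrix (Fin T.n) (Fin T.n) ℂ) :
    Matrix (Fin (T.ns j)) (Fin (T.ns j)) ℂ :=
  Matrix.of fun s t => M (T.emb ⟨j, s⟩) (T.emb ⟨j, t⟩)

/-- Block diagonal matrix on `Fin T.n`. -/
def bd (T : Setup2) (h : ∀ j : Fin T.m, Matrix (Fin (T.ns j)) (Fin (T.ns j)) ℂ) :
    Matrix (Fin T.n) (Fin T.n) ℂ :=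
  (Matrix.blockDiagonal' h).submatrix T.emb.symm T.emb.symm

lemma Bmat2_aux (T : Setup2) (p q : Σ j : Fin T.m, Fin (T.ns j)) :
    (if h : p.1 = q.1 then
      (if Fin.cast (by rw [h]) p.2 = q.2 then Polynomial.C (T.al q.1) else 0)
        + Polynomial.C (T.R q.1 (Fin.cast (by rw [h]) p.2) q.2) * Polynomial.X
    else 0) = Polynomial.C (if p = q then T.al p.1 else 0)
      + Polynomial.C (Matrix.blockDiagonal' T.R p q) * Polynomial.X := by
  obtain ⟨i, s⟩ := p
  obtain ⟨j, t⟩ := q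
  by_cases hij : i = j
  · subst hij
    by_cases hst : s = t
    · subst hst
      simp [Matrix.blockDiagonal'_apply]
    · simp [Matrix.blockDiagonal'_apply, hst]
  · simp [Matrix.blockDiagonal'_apply, hij]

lemma Bmat2_eq (T : Setup2) : Bmat2 T = polyOf T (bd T T.R) (Birr T) := by
  ext1 a b
  have hab : (a = b) ↔ T.emb.symm a = T.emb.symm b := T.emb.symm.injective.eq_iff.symm
  simp only [Bmat2, polyOf, bd, Birr, Matrix.of_apply, Matrix.submatrix_apply, hab]
  exact Bmat2_aux T _ _

lemma orbit_eq (T : Setup2) (g : PM T) (A1 A2 B1 B0 : Matrix (Fin T.n) (Fin T.n) ℂ) :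
    (∀ a b, (Polynomial.X ^ 2 : Polynomial ℂ) ∣
        (g * polyOf T B1 B0 - polyOf T A1 A2 * g) a b) ↔
      (g.map fun r => r.coeff 0) * B0 = A2 * (g.map fun r => r.coeff 0) ∧
      (g.map fun r => r.coeff 0) * B1 + (g.map fun r => r.coeff 1) * B0
        = A2 * (g.map fun r => r.coeff 1) + A1 * (g.map fun r => r.coeff 0) := by
  have h2 : ∀ p : Polynomial ℂ, (Polynomial.X ^ 2 ∣ p) ↔ p.coeff 0 = 0 ∧ p.coeff 1 = 0 := by
    intro p
    rw [Polynomial.X_pow_dvd_iff]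
    constructor
    · intro h
      exact ⟨h 0 (by norm_num), h 1 (by norm_num)⟩
    · rintro ⟨h0, h1⟩ d hd
      interval_cases d <;> assumption
  simp only [h2, forall_and, ← Matrix.ext_iff]
  refine and_congr (forall_congr' fun a => forall_congr' fun b => ?_)
    (forall_congr' fun a => forall_congr' fun b => ?_)
  · simp [Matrix.sub_apply, Matrix.mul_apply, polyOf, 
      Polynomial.mul_coeff_zero, sub_eq_zero]
  · simp [Matrix.sub_apply, Matrix.mul_apply, polyOf, 
      Polynomial.mul_coeff_zero, Polynomial.mul_coeff_one, sub_eq_zero,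
      Polynomial.coeff_C, Finset.sum_add_distrib]

lemma Birr_diag (T : Setup2) : Birr T = Matrix.diagonal fun a => T.al (T.emb.symm a).1 := by
  ext a b
  simp [Birr, Matrix.diagonal_apply]

/-- Vanishing off-diagonal blocks. -/
def OffZero (T : Setup2) (P : Matrix (Fin T.n) (Fin T.n) ℂ) : Prop :=
  ∀ a b, (T.emb.symm a).1 ≠ (T.emb.symm b).1 → P a b = 0

lemma offZero_of_comm (T : Setup2) (P : Matrix (Fin T.n) (Fin T.n) ℂ)
    (h : Birr T * P = P * Birr T) : OffZero T P := by
  intro a b hab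
  have h1 := congrFun (congrFun h a) b
  rw [Birr_diag, Matrix.diagonal_mul, Matrix.mul_diagonal] at h1
  have h3 : (T.al (T.emb.symm a).1 - T.al (T.emb.symm b).1) * P a b = 0 := by
    linear_combination h1
  rcases mul_eq_zero.1 h3 with h4 | h4
  · exact absurd (T.hal (sub_eq_zero.1 h4)) hab
  · exact h4

lemma comm_of_offZero (T : Setup2) (P : Matrix (Fin T.n) (Fin T.n) ℂ)
    (h : OffZero T P) : Birr T * P = P * Birr T := by
  ext a b
  rw [Birr_diag, Matrix.diagonal_mul, Matrix.mul_diagonal]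
  by_cases hab : (T.emb.symm a).1 = (T.emb.symm b).1
  · rw [hab, mul_comm]
  · rw [h a b hab]; ring

lemma sum_emb (T : Setup2) (f : Fin T.n → ℂ) :
    ∑ c, f c = ∑ j : Fin T.m, ∑ s : Fin (T.ns j), f (T.emb ⟨j, s⟩) := by
  rw [← Equiv.sum_comp T.emb, Fintype.sum_sigma]

lemma blockAt_mul_left (T : Setup2) (j : Fin T.m) (P Q : Matrix (Fin T.n) (Fin T.n) ℂ)
    (h : OffZero T P) : blockAt T j (P * Q) = blockAt T j P * blockAt T j Q := by
  ext s t
  simp only [blockAt, Matrix.of_apply, Matrix.mul_apply]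
  rw [sum_emb, Finset.sum_eq_single j]
  · intro k _ hk
    refine Finset.sum_eq_zero fun u _ => ?_
    rw [h _ _ (by simpa using hk.symm), zero_mul]
  · simp

lemma blockAt_mul_right (T : Setup2) (j : Fin T.m) (P Q : Matrix (Fin T.n) (Fin T.n) ℂ)
    (h : OffZero T Q) : blockAt T j (P * Q) = blockAt T j P * blockAt T j Q := by
  ext s t
  simp only [blockAt, Matrix.of_apply, Matrix.mul_apply]
  rw [sum_emb, Finset.sum_eq_single j]
  · intro k _ hk
    refine Finset.sum_eq_zero fun u _ => ?_
    rw [h _ _ (by simpa using hk), mul_zero]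
  · simp

lemma blockAt_one (T : Setup2) (j : Fin T.m) : blockAt T j 1 = 1 := by
  ext s t
  simp [blockAt, Matrix.one_apply]

lemma blockAt_bd (T : Setup2) (j : Fin T.m)
    (h : ∀ j : Fin T.m, Matrix (Fin (T.ns j)) (Fin (T.ns j)) ℂ) :
    blockAt T j (bd T h) = h j := by
  ext s t
  simp [blockAt, bd, Matrix.blockDiagonal'_apply]

lemma bd_offZero (T : Setup2)
    (h : ∀ j : Fin T.m, Matrix (Fin (T.ns j)) (Fin (T.ns j)) ℂ) : OffZero T (bd T h) := by
  intro a b hab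
  simp [bd, Matrix.blockDiagonal'_apply, hab]

lemma bd_mul (T : Setup2)
    (h k : ∀ j : Fin T.m, Matrix (Fin (T.ns j)) (Fin (T.ns j)) ℂ) :
    bd T h * bd T k = bd T fun j => h j * k j := by
  simp [bd, Matrix.blockDiagonal'_mul, Matrix.submatrix_mul_equiv]

lemma bd_one (T : Setup2) : bd T (fun _ => 1) = 1 := by
  have : (Matrix.blockDiagonal' fun j : Fin T.m =>
      (1 : Matrix (Fin (T.ns j)) (Fin (T.ns j)) ℂ)) = 1 := Matrix.blockDiagonal'_one
  rw [bd, this, Matrix.submatrix_one_equiv]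

/-- Solving `M - B₁ = Z B₀ - B₀ Z`. -/
lemma exists_comm (T : Setup2) (N : Matrix (Fin T.n) (Fin T.n) ℂ)
    (hN : ∀ j, blockAt T j N = 0) :
    ∃ Z, N = Z * Birr T - Birr T * Z := by
  refine ⟨Matrix.of fun a b =>
    N a b / (T.al (T.emb.symm b).1 - T.al (T.emb.symm a).1), ?_⟩
  ext a b
  rw [Birr_diag, Matrix.sub_apply, Matrix.diagonal_mul, Matrix.mul_diagonal, Matrix.of_apply]
  obtain ⟨⟨i, s⟩, rfl⟩ := T.emb.surjective a
  obtain ⟨⟨j, t⟩, rfl⟩ := T.emb.surjective b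
  simp only [Equiv.symm_apply_apply]
  by_cases hij : i = j
  · subst hij
    have : N (T.emb ⟨i, s⟩) (T.emb ⟨i, t⟩) = 0 := congrFun (congrFun (hN i) s) t
    simp [this]
  · have : T.al j - T.al i ≠ 0 := sub_ne_zero.2 fun h => hij (T.hal h).symm
    field_simp

lemma blockAt_sub (T : Setup2) (j : Fin T.m) (P Q : Matrix (Fin T.n) (Fin T.n) ℂ) :
    blockAt T j (P - Q) = blockAt T j P - blockAt T j Q := rfl

lemma degLT2_polyOf (T : Setup2) (A1 A2 : Matrix (Fin T.n) (Fin T.n) ℂ) :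
    degLT2 T (polyOf T A1 A2) := by
  intro a b
  rw [polyOf, Matrix.of_apply, add_comm]
  exact lt_of_le_of_lt Polynomial.degree_linear_le (by norm_num)

lemma polyOf_coeff0 (T : Setup2) (A1 A2 : Matrix (Fin T.n) (Fin T.n) ℂ) :
    ((polyOf T A1 A2).map fun r => r.coeff 0) = A2 := by
  ext a b; simp [polyOf]

lemma polyOf_coeff1 (T : Setup2) (A1 A2 : Matrix (Fin T.n) (Fin T.n) ℂ) :
    ((polyOf T A1 A2).map fun r => r.coeff 1) = A1 := by
  ext a b; simp [polyOf, Polynomial.coeff_C]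

lemma blockAt_comm (T : Setup2) (j : Fin T.m) (Z : Matrix (Fin T.n) (Fin T.n) ℂ) :
    blockAt T j (Z * Birr T - Birr T * Z) = 0 := by
  ext s t
  rw [Birr_diag]
  simp only [blockAt, Matrix.of_apply, Matrix.sub_apply, Matrix.diagonal_mul,
    Matrix.mul_diagonal, Equiv.symm_apply_apply, Matrix.zero_apply]
  ring

lemma comm_of_two (T : Setup2) (A2 : Matrix (Fin T.n) (Fin T.n) ℂ)
    (G1 G2 : (Matrix (Fin T.n) (Fin T.n) ℂ)ˣ)
    (h1 : (G1⁻¹).val * A2 * G1.val = Birr T) (h2 : (G2⁻¹).val * A2 * G2.val = Birr T) :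
    OffZero T ((G2⁻¹).val * G1.val) := by
  apply offZero_of_comm
  calc Birr T * ((G2⁻¹).val * G1.val)
      = (G2⁻¹).val * A2 * G1.val := by
        rw [← h2, ← mul_assoc, mul_assoc _ G2.val, Units.mul_inv, mul_one]
    _ = (G2⁻¹).val * G1.val * Birr T := by
        rw [← h1]
        simp only [mul_assoc, Units.mul_inv_cancel_left]

/-- **Structure of truncated orbits of degree 2.**
`𝒪_B` consists of the `A₂x⁻² + A₁x⁻¹ ∈ 𝔤₂*` for which some `G ∈ GL(n,ℂ)` satisfies
`G⁻¹A₂G = B_irr` and `(G⁻¹A₁G)_{i,i} ∈ C_{R_i}` for all `i`.  Moreover, if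
`G₁, G₂ ∈ GL(n,ℂ)` both satisfy `G_t⁻¹ A₂ G_t = B_irr`, then `G₂⁻¹G₁` is block
diagonal with invertible blocks. -/
theorem statement16 (T : Setup2) :
    (∀ A1 A2 : Matrix (Fin T.n) (Fin T.n) ℂ,
      inOrbit2 T (polyOf T A1 A2) ↔
        ∃ G : (Matrix (Fin T.n) (Fin T.n) ℂ)ˣ,
          (G⁻¹).val * A2 * G.val = Birr T ∧
          ∀ j : Fin T.m, ∃ h : (Matrix (Fin (T.ns j)) (Fin (T.ns j)) ℂ)ˣ,
            blockAt T j ((G⁻¹).val * A1 * G.val) = h.val * T.R j * (h⁻¹).val) ∧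
    (∀ (A2 : Matrix (Fin T.n) (Fin T.n) ℂ)
        (G1 G2 : (Matrix (Fin T.n) (Fin T.n) ℂ)ˣ),
      (G1⁻¹).val * A2 * G1.val = Birr T →
      (G2⁻¹).val * A2 * G2.val = Birr T →
      (∀ a b, (T.emb.symm a).1 ≠ (T.emb.symm b).1 → ((G2⁻¹).val * G1.val) a b = 0) ∧
      ∀ j : Fin T.m, IsUnit (blockAt T j ((G2⁻¹).val * G1.val))) := by
  refine ⟨fun A1 A2 => ⟨?_, ?_⟩, ?_⟩
  · rintro ⟨-, g, ⟨G, hG⟩, hg⟩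
    rw [Bmat2_eq, orbit_eq, ← hG] at hg
    obtain ⟨e0, e1⟩ := hg
    have e2 : (G⁻¹).val * A2 * G.val = Birr T := by
      rw [mul_assoc, ← e0, Units.inv_mul_cancel_left]
    refine ⟨G, e2, fun j => ⟨1, ?_⟩⟩
    generalize (g.map fun r => r.coeff 1) = g1 at e1
    have e3 : (G⁻¹).val * A1 * G.val - bd T T.R
        = ((G⁻¹).val * g1) * Birr T - Birr T * ((G⁻¹).val * g1) := by
      have e4 : A1 * G.val = G.val * bd T T.R + g1 * Birr T - A2 * g1 := by
        rw [e1]; abel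
      rw [mul_assoc, e4, ← e2]
      simp only [mul_sub, mul_add, mul_assoc, Units.inv_mul_cancel_left,
        Units.mul_inv_cancel_left]
      abel
    have e5 := congrArg (blockAt T j) e3
    rw [blockAt_comm, blockAt_sub, blockAt_bd, sub_eq_zero] at e5
    simpa using e5
  · rintro ⟨G, e0, hh⟩
    choose h hh using hh
    let H : (Matrix (Fin T.n) (Fin T.n) ℂ)ˣ :=
      ⟨bd T fun j => (h j).val, bd T fun j => ((h j)⁻¹).val,
        by simp only [bd_mul, Units.mul_inv, bd_one],
        by simp only [bd_mul, Units.inv_mul, bd_one]⟩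
    have hHv : H.val = bd T fun j => (h j).val := rfl
    have hHi : (H⁻¹).val = bd T fun j => ((h j)⁻¹).val := rfl
    have hB : Birr T * H.val = H.val * Birr T := comm_of_offZero T _ (bd_offZero T _)
    obtain ⟨Z, hZ⟩ := exists_comm T
      ((H⁻¹).val * ((G⁻¹).val * A1 * G.val) * H.val - bd T T.R) (by
        intro j
        rw [blockAt_sub, hHv, hHi, blockAt_mul_right _ _ _ _ (bd_offZero T _),
          blockAt_mul_left _ _ _ _ (bd_offZero T _), hh, blockAt_bd, blockAt_bd, blockAt_bd]
        simp [mul_assoc])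
    have hA2 : A2 * G.val = G.val * Birr T := by
      rw [← e0]; simp only [mul_assoc, Units.mul_inv_cancel_left]
    refine ⟨degLT2_polyOf T _ _, polyOf T (G.val * H.val * Z) (G.val * H.val), ?_, ?_⟩
    · rw [polyOf_coeff0]; exact (G * H).isUnit
    · rw [Bmat2_eq, orbit_eq, polyOf_coeff0, polyOf_coeff1]
      have k0 : G.val * H.val * Birr T = A2 * (G.val * H.val) := by
        rw [← mul_assoc, hA2, mul_assoc, ← hB, mul_assoc]
      refine ⟨k0, ?_⟩
      have k1 := congrArg (fun M => G.val * H.val * M) hZ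
      simp only [mul_sub] at k1
      have k2 : G.val * H.val * ((H⁻¹).val * ((G⁻¹).val * A1 * G.val) * H.val)
          = A1 * (G.val * H.val) := by
        simp only [mul_assoc, Units.mul_inv_cancel_left]
      have k3 : G.val * H.val * (Birr T * Z) = A2 * (G.val * H.val * Z) := by
        rw [← mul_assoc, k0, mul_assoc A2]
      rw [k2, k3, ← mul_assoc (G.val * H.val) Z] at k1
      rw [sub_eq_sub_iff_add_eq_add] at k1
      rw [add_comm (A2 * _), k1, add_comm]
  · intro A2 G1 G2 h1 h2
    have c := comm_of_two T A2 G1 G2 h1 h2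
    refine ⟨c, fun j => ?_⟩
    have e : blockAt T j ((G2⁻¹).val * G1.val) * blockAt T j ((G1⁻¹).val * G2.val) = 1 := by
      rw [← blockAt_mul_left _ _ _ _ c, ← blockAt_one T j]
      simp [mul_assoc]
    exact IsUnit.of_mul_eq_one _ e

end

end DS2
end

section
/- The map (g,A) ↦ gAg^{−1} induces a well-defined bijection from GL(n,ℂ) ×_H Ad_H(O^o_B) onto O_B. -/
open Polynomial Matrix

namespace DS3

noncomputable section

/-- Data of an HTL normal form
`B = diag(q₁(x⁻¹) I_{n₁} + R₁ x⁻¹, …, q_m(x⁻¹) I_{n_m} + R_m x⁻¹) ∈ 𝔤_k*` on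
`ℂⁿ`, `n = n₁ + ⋯ + n_m`, with pairwise distinct `q_j(s) ∈ s²ℂ[s]` of degree `≤ k`. -/
structure Setup3 where
  m : ℕ
  hm : 0 < m
  ns : Fin m → ℕ
  n : ℕ
  emb : (Σ j : Fin m, Fin (ns j)) ≃ Fin n
  k : ℕ
  hk : 0 < k
  q : Fin m → Polynomial ℂ
  hq0 : ∀ j, (q j).coeff 0 = 0
  hq1 : ∀ j, (q j).coeff 1 = 0
  hqdeg : ∀ j, (q j).natDegree ≤ k
  hqdist : ∀ j j', j ≠ j' → q j ≠ q j'
  R : ∀ j : Fin m, Matrix (Fin (ns j)) (Fin (ns j)) ℂ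

/-- An element `Σ_{j=1}^k A_j x^{-j}` of `𝔤_k*` is encoded as the polynomial matrix
`Σ_{j=1}^k A_j x^{k-j}` (degree < k); the coadjoint `G_k`-action becomes
conjugation modulo `x^k`. -/
abbrev PM3 (T : Setup3) := Matrix (Fin T.n) (Fin T.n) (Polynomial ℂ)

/-- All entries have degree `< k`. -/
def degLT3 (T : Setup3) (k : ℕ) (A : PM3 T) : Prop := ∀ a b, (A a b).degree < (k : ℕ)

/-- The HTL normal form `B`, in the polynomial encoding. -/
def Bmat3 (T : Setup3) : PM3 T :=
  Matrix.of fun a b =>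
    if h : (T.emb.symm a).1 = (T.emb.symm b).1 then
      (if Fin.cast (by rw [h]) (T.emb.symm a).2 = (T.emb.symm b).2 then
          Polynomial.reflect T.k (T.q (T.emb.symm b).1)
        else 0)
        + Polynomial.C
            (T.R (T.emb.symm b).1 (Fin.cast (by rw [h]) (T.emb.symm a).2)
              (T.emb.symm b).2)
          * Polynomial.X ^ (T.k - 1)
    else 0

/-- Membership in the truncated orbit `𝒪_B` (conjugation mod `x^k` by an element of
`G_k`, i.e. a polynomial matrix with invertible constant term). -/
def inOrbit3 (T : Setup3) (A : PM3 T) : Prop :=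
  degLT3 T T.k A ∧
  ∃ g : PM3 T, IsUnit (g.map fun r => r.coeff 0) ∧
    ∀ a b, (Polynomial.X ^ T.k : Polynomial ℂ) ∣ (g * Bmat3 T - A * g) a b

/-- Membership in the `G⁰_k`-orbit `𝒪⁰_B` (conjugation mod `x^k` by an element of
`G⁰_k`, i.e. a polynomial matrix with constant term `I_n`). -/
def inOrbitO (T : Setup3) (A : PM3 T) : Prop :=
  degLT3 T T.k A ∧
  ∃ g : PM3 T, (g.map fun r => r.coeff 0) = 1 ∧
    ∀ a b, (Polynomial.X ^ T.k : Polynomial ℂ) ∣ (g * Bmat3 T - A * g) a b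

/-- `h` is block diagonal with respect to `ℂⁿ = V₁ ⊕ ⋯ ⊕ V_m`. -/
def blockDiag3 (T : Setup3) (h : Matrix (Fin T.n) (Fin T.n) ℂ) : Prop :=
  ∀ a b, (T.emb.symm a).1 ≠ (T.emb.symm b).1 → h a b = 0

/-- `Ad_H(𝒪⁰_B) = { h A h⁻¹ : h ∈ H, A ∈ 𝒪⁰_B }`, where
`H = {diag(h₁,…,h_m)} ⊂ GL(n,ℂ)`. -/
def inAdH (T : Setup3) (A : PM3 T) : Prop :=
  ∃ h : (Matrix (Fin T.n) (Fin T.n) ℂ)ˣ, blockDiag3 T h.val ∧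
    ∃ A' : PM3 T, inOrbitO T A' ∧
      A = (h.val.map Polynomial.C) * A' * ((h⁻¹).val.map Polynomial.C)

/-- The equivalence relation `(g,A) ∼ (g h⁻¹, h A h⁻¹)` (`h ∈ H`) defining
`GL(n,ℂ) ×_H Ad_H(𝒪⁰_B)`. -/
def rel17 (T : Setup3) :
    ((Matrix (Fin T.n) (Fin T.n) ℂ)ˣ × {A : PM3 T // inAdH T A}) →
    ((Matrix (Fin T.n) (Fin T.n) ℂ)ˣ × {A : PM3 T // inAdH T A}) → Prop :=
  fun x y =>
    ∃ h : (Matrix (Fin T.n) (Fin T.n) ℂ)ˣ, blockDiag3 T h.val ∧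
      y.1 = x.1 * h⁻¹ ∧
      y.2.val = (h.val.map Polynomial.C) * x.2.val * ((h⁻¹).val.map Polynomial.C)

/-- Entrywise divisibility by `p`. -/
def dvd17 (T : Setup3) (p : Polynomial ℂ) (M : PM3 T) : Prop := ∃ N : PM3 T, M = p • N

theorem dvd17_iff (T : Setup3) (p : Polynomial ℂ) (M : PM3 T) :
    (∀ a b, p ∣ M a b) ↔ dvd17 T p M := by
  constructor
  · intro h
    choose N hN using h
    exact ⟨Matrix.of N, by ext1 a b; simp [hN a b]⟩
  · rintro ⟨N, rfl⟩ a b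
    exact ⟨N a b, by simp⟩

/-- Constant matrices. -/
abbrev cm17 (T : Setup3) : Matrix (Fin T.n) (Fin T.n) ℂ →+* PM3 T :=
  (Polynomial.C : ℂ →+* ℂ[X]).mapMatrix

/-- Constant term. -/
abbrev ct17 (T : Setup3) : PM3 T →+* Matrix (Fin T.n) (Fin T.n) ℂ :=
  (Polynomial.constantCoeff : ℂ[X] →+* ℂ).mapMatrix

theorem ct17_eq (T : Setup3) (g : PM3 T) : (g.map fun r => r.coeff 0) = ct17 T g := by
  ext a b; simp

theorem ct17_cm17 (T : Setup3) (h : Matrix (Fin T.n) (Fin T.n) ℂ) : ct17 T (cm17 T h) = h := by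
  ext a b; simp

theorem cm_inv (T : Setup3) (h : (Matrix (Fin T.n) (Fin T.n) ℂ)ˣ) :
    cm17 T h⁻¹.val * cm17 T h.val = 1 := by
  rw [← map_mul]; simp only [Units.inv_mul, map_one]

theorem cm_inv_r (T : Setup3) (h : (Matrix (Fin T.n) (Fin T.n) ℂ)ˣ) :
    cm17 T h.val * cm17 T h⁻¹.val = 1 := by
  rw [← map_mul]; simp only [Units.mul_inv, map_one]

theorem deg_left (T : Setup3) (h : Matrix (Fin T.n) (Fin T.n) ℂ) (A : PM3 T) (k : ℕ)
    (hA : degLT3 T k A) : degLT3 T k (cm17 T h * A) := by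
  intro a b
  rw [Matrix.mul_apply, ← Polynomial.mem_degreeLT]
  refine Submodule.sum_mem _ fun i _ => ?_
  have := (Polynomial.degreeLT ℂ k).smul_mem (h a i) (Polynomial.mem_degreeLT.2 (hA i b))
  simpa [Polynomial.smul_eq_C_mul] using this

theorem deg_right (T : Setup3) (h : Matrix (Fin T.n) (Fin T.n) ℂ) (A : PM3 T) (k : ℕ)
    (hA : degLT3 T k A) : degLT3 T k (A * cm17 T h) := by
  intro a b
  rw [Matrix.mul_apply, ← Polynomial.mem_degreeLT]
  refine Submodule.sum_mem _ fun i _ => ?_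
  have := (Polynomial.degreeLT ℂ k).smul_mem (h i b) (Polynomial.mem_degreeLT.2 (hA a i))
  simpa [Polynomial.smul_eq_C_mul, mul_comm] using this

/-- Conjugating the intertwining relation by a constant matrix. -/
theorem conj17 (T : Setup3) (h : (Matrix (Fin T.n) (Fin T.n) ℂ)ˣ) (p : ℂ[X]) (A B g : PM3 T)
    (H : dvd17 T p (g * B - A * g)) :
    dvd17 T p ((cm17 T h.val * g) * B
      - (cm17 T h.val * A * cm17 T h⁻¹.val) * (cm17 T h.val * g)) := by
  obtain ⟨N, hN⟩ := H
  refine ⟨cm17 T h.val * N, ?_⟩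
  rw [← Matrix.mul_smul, ← hN]
  have := cm_inv T h
  calc _ = cm17 T h.val * g * B
      - cm17 T h.val * A * (cm17 T h⁻¹.val * cm17 T h.val) * g := by noncomm_ring
    _ = _ := by rw [this]; noncomm_ring

/-- The diagonal matrix recording the block index. -/
def idx17 (T : Setup3) : Matrix (Fin T.n) (Fin T.n) ℂ :=
  Matrix.diagonal fun a => (((T.emb.symm a).1 : ℕ) : ℂ)

theorem blockDiag_iff (T : Setup3) (h : Matrix (Fin T.n) (Fin T.n) ℂ) :
    blockDiag3 T h ↔ Commute h (idx17 T) := by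
  constructor
  · intro H
    ext a b
    simp only [idx17, Matrix.mul_diagonal, Matrix.diagonal_mul]
    by_cases e : (T.emb.symm a).1 = (T.emb.symm b).1
    · rw [e, mul_comm]
    · simp [H a b e]
  · intro H a b hab
    have := congrFun (congrFun H.eq a) b
    simp only [idx17, Matrix.mul_diagonal, Matrix.diagonal_mul] at this
    have h2 : h a b * ((((T.emb.symm b).1 : ℕ) : ℂ) - (((T.emb.symm a).1 : ℕ) : ℂ)) = 0 := by
      linear_combination this
    rcases mul_eq_zero.1 h2 with h3 | h3
    · exact h3
    · exfalso
      apply hab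
      rw [sub_eq_zero] at h3
      exact (Fin.ext (Nat.cast_injective h3)).symm

theorem sigma_aux (T : Setup3) (u v : Σ j : Fin T.m, Fin (T.ns j)) (h1 : u.1 = v.1)
    (h2 : u.2.val = v.2.val) : u = v := by
  obtain ⟨u1, u2⟩ := u
  obtain ⟨v1, v2⟩ := v
  dsimp only at h1
  subst h1
  exact congrArg (Sigma.mk u1) (Fin.ext h2)

/-- `B` is the scalar-diagonal matrix of reflected `q`'s modulo `x^(k-1)`. -/
theorem Bmat_decomp (T : Setup3) : dvd17 T (X ^ (T.k - 1))
    (Bmat3 T - Matrix.diagonal fun a => Polynomial.reflect T.k (T.q (T.emb.symm a).1)) := by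
  rw [← dvd17_iff]
  intro a b
  by_cases hab : a = b
  · subst hab
    simp [Bmat3]
  · rw [Matrix.sub_apply, Matrix.diagonal_apply_ne _ hab, sub_zero, Bmat3, Matrix.of_apply]
    split_ifs with h1 h2
    · exfalso
      apply hab
      apply T.emb.symm.injective
      exact sigma_aux T _ _ h1 (congrArg Fin.val h2)
    · simp
    · simp

theorem coeff_key (T : Setup3) (i j : Fin T.m) (hij : i ≠ j) (f : ℂ[X])
    (hf : X ^ (T.k - 1) ∣
      f * (Polynomial.reflect T.k (T.q j) - Polynomial.reflect T.k (T.q i))) :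
    f.coeff 0 = 0 := by
  set d := T.q j - T.q i with hd
  have hd0 : d ≠ 0 := sub_ne_zero.2 (T.hqdist j i hij.symm)
  have hdeg : d.natDegree ≤ T.k :=
    (Polynomial.natDegree_sub_le _ _).trans (max_le (T.hqdeg j) (T.hqdeg i))
  have hge : 2 ≤ d.natDegree := by
    by_contra hlt
    apply Polynomial.leadingCoeff_ne_zero.2 hd0
    have : d.natDegree = 0 ∨ d.natDegree = 1 := by omega
    rw [Polynomial.leadingCoeff]
    rcases this with h | h <;> rw [h] <;> simp [hd, T.hq0, T.hq1]
  rw [← Polynomial.reflect_sub, ← hd, Polynomial.X_pow_dvd_iff] at hf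
  have hc := hf (T.k - d.natDegree) (by omega)
  rw [Polynomial.coeff_mul, Finset.sum_eq_single (0, T.k - d.natDegree)] at hc
  · rw [Polynomial.coeff_reflect, Polynomial.revAt_le (by omega),
      show T.k - (T.k - d.natDegree) = d.natDegree by omega] at hc
    exact (mul_eq_zero.1 hc).resolve_right (Polynomial.leadingCoeff_ne_zero.2 hd0)
  · rintro ⟨s, t⟩ hst hne
    rw [Finset.HasAntidiagonal.mem_antidiagonal] at hst
    dsimp only at hst ⊢
    have hs : s ≠ 0 := by
      rintro rfl
      apply hne
      rw [← hst]; simp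
    rw [Polynomial.coeff_reflect, Polynomial.revAt_le (by omega),
      Polynomial.coeff_eq_zero_of_natDegree_lt (p := d) (by omega), mul_zero]
  · intro h; simp at h

theorem block_of_comm (T : Setup3) (P : PM3 T)
    (H : dvd17 T (X ^ T.k) (P * Bmat3 T - Bmat3 T * P)) : blockDiag3 T (ct17 T P) := by
  obtain ⟨N, hN⟩ := H
  obtain ⟨M, hM⟩ := Bmat_decomp T
  intro a b hab
  set D : PM3 T := Matrix.diagonal fun a => Polynomial.reflect T.k (T.q (T.emb.symm a).1) with hD
  have hB : Bmat3 T = D + (X ^ (T.k - 1) : ℂ[X]) • M := by rw [← hM]; abel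
  have hX : (X ^ T.k : ℂ[X]) = X ^ (T.k - 1) * X := by
    rw [← pow_succ, Nat.sub_add_cancel T.hk]
  have key : P * D - D * P
      = (X ^ (T.k - 1) : ℂ[X]) • ((X : ℂ[X]) • N - P * M + M * P) := by
    rw [hB, hX, mul_add, add_mul, Matrix.mul_smul, Matrix.smul_mul, mul_smul] at hN
    rw [smul_add, smul_sub, ← hN]; abel
  have := congrFun (congrFun key a) b
  simp only [hD, Matrix.sub_apply, Matrix.mul_diagonal, Matrix.diagonal_mul] at this
  have h0 := coeff_key T _ _ hab (P a b) ⟨((X : ℂ[X]) • N - P * M + M * P) a b, by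
    rw [mul_sub, mul_comm (P a b) (reflect T.k (T.q (T.emb.symm a).1)), this]
    simp [Matrix.smul_apply]⟩
  simpa using h0

theorem comm_of_two (T : Setup3) (A B g g' : PM3 T) (k : ℕ) (hu : IsUnit (ct17 T g'))
    (H : dvd17 T (X ^ k) (g * B - A * g)) (H' : dvd17 T (X ^ k) (g' * B - A * g')) :
    dvd17 T (X ^ k) ((g'.adjugate * g) * B - B * (g'.adjugate * g)) := by
  obtain ⟨N, hN⟩ := H
  obtain ⟨N', hN'⟩ := H'
  have hdet : g'.det.coeff 0 ≠ 0 := by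
    have : (ct17 T g').det = g'.det.coeff 0 := by
      rw [← RingHom.map_det]; simp
    rw [← this]
    exact ((Matrix.isUnit_iff_isUnit_det _).1 hu).ne_zero
  have hcop : IsCoprime (X ^ k : ℂ[X]) g'.det := by
    apply IsCoprime.pow_left
    rw [Polynomial.prime_X.coprime_iff_not_dvd, Polynomial.X_dvd_iff]
    exact hdet
  have e1 : g'.adjugate * g' = g'.det • (1 : PM3 T) := Matrix.adjugate_mul g'
  have e2 : g' * g'.adjugate = g'.det • (1 : PM3 T) := Matrix.mul_adjugate g'
  have hgB : g * B = A * g + (X ^ k : ℂ[X]) • N := by rw [← hN]; abel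
  have hAg : A * g' = g' * B - (X ^ k : ℂ[X]) • N' := by rw [← hN']; abel
  have e3 : g'.det • (g'.adjugate * A) = g'.det • (B * g'.adjugate)
      - (X ^ k : ℂ[X]) • (g'.adjugate * N' * g'.adjugate) := by
    calc g'.det • (g'.adjugate * A) = g'.adjugate * A * (g'.det • (1 : PM3 T)) := by simp
      _ = g'.adjugate * (A * g') * g'.adjugate := by rw [← e2]; noncomm_ring
      _ = (g'.adjugate * g') * B * g'.adjugate
          - g'.adjugate * ((X ^ k : ℂ[X]) • N') * g'.adjugate := by rw [hAg]; noncomm_ring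
      _ = _ := by rw [e1]; simp
  have e4 : g'.det • ((g'.adjugate * g) * B - B * (g'.adjugate * g))
      = (X ^ k : ℂ[X]) • (g'.det • (g'.adjugate * N) - g'.adjugate * N' * g'.adjugate * g) := by
    calc _ = g'.det • (g'.adjugate * (g * B)) - g'.det • (B * g'.adjugate) * g := by
            rw [smul_sub, Matrix.smul_mul]; simp only [mul_assoc]
      _ = (g'.det • (g'.adjugate * A)) * g + g'.det • ((X ^ k : ℂ[X]) • (g'.adjugate * N))
          - g'.det • (B * g'.adjugate) * g := by
            rw [hgB, mul_add, smul_add, Matrix.mul_smul, Matrix.smul_mul, Matrix.smul_mul, mul_assoc,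
              mul_assoc]
      _ = _ := by
            rw [e3, sub_mul, smul_sub, Matrix.smul_mul (X ^ k : ℂ[X]), smul_comm g'.det]
            abel
  rw [← dvd17_iff]
  intro a b
  apply hcop.dvd_of_dvd_mul_left
  exact ⟨_, by simpa [Matrix.smul_apply] using congrFun (congrFun e4 a) b⟩

theorem orbit_mem (T : Setup3) (x : (Matrix (Fin T.n) (Fin T.n) ℂ)ˣ) (A : PM3 T)
    (hA : inAdH T A) :
    degLT3 T T.k (cm17 T x.val * A * cm17 T x⁻¹.val) ∧
    ∃ h : (Matrix (Fin T.n) (Fin T.n) ℂ)ˣ, blockDiag3 T h.val ∧ ∃ g : PM3 T,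
      ct17 T g = (x * h).val ∧
      dvd17 T (X ^ T.k) (g * Bmat3 T - (cm17 T x.val * A * cm17 T x⁻¹.val) * g) := by
  obtain ⟨h, hh, A', ⟨hdeg, u, hu, hd⟩, rfl⟩ := hA
  rw [dvd17_iff] at hd
  rw [ct17_eq] at hu
  refine ⟨deg_right T _ _ _ (deg_left T _ _ _ (deg_right T _ _ _ (deg_left T _ _ _ hdeg))), h, hh,
    cm17 T x.val * (cm17 T h.val * u), ?_, ?_⟩
  · rw [map_mul, map_mul, ct17_cm17, ct17_cm17, hu, mul_one, Units.val_mul]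
  · exact conj17 T x _ _ _ _ (conj17 T h _ _ _ _ hd)

theorem orbit_mem' (T : Setup3) (x : (Matrix (Fin T.n) (Fin T.n) ℂ)ˣ) (A : PM3 T)
    (hA : inAdH T A) : inOrbit3 T (cm17 T x.val * A * cm17 T x⁻¹.val) := by
  obtain ⟨h1, h, -, g, hg, hd⟩ := orbit_mem T x A hA
  refine ⟨h1, g, ?_, (dvd17_iff _ _ _).2 hd⟩
  rw [ct17_eq, hg]
  exact (x * h).isUnit

theorem inj_key (T : Setup3) (x y : (Matrix (Fin T.n) (Fin T.n) ℂ)ˣ) (A A' : PM3 T)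
    (hA : inAdH T A) (hA' : inAdH T A')
    (e : cm17 T x.val * A * cm17 T x⁻¹.val = cm17 T y.val * A' * cm17 T y⁻¹.val) :
    blockDiag3 T (y⁻¹ * x).val := by
  obtain ⟨-, h, hh, g, hg, hd⟩ := orbit_mem T x A hA
  obtain ⟨-, h', hh', g', hg', hd'⟩ := orbit_mem T y A' hA'
  rw [← e] at hd'
  have hc := block_of_comm T _ (comm_of_two T _ _ g g' _ (by rw [hg']; exact Units.isUnit _) hd hd')
  rw [map_mul, hg, RingHom.map_adjugate, hg', blockDiag_iff] at hc
  rw [blockDiag_iff] at hh hh' ⊢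
  have hdet : IsUnit (y * h').val.det := (Matrix.isUnit_iff_isUnit_det _).1 (y * h').isUnit
  have hadj : (y * h').val.adjugate = (y * h').val.det • ((y * h')⁻¹).val := by
    rw [Matrix.coe_units_inv, Matrix.inv_def, smul_smul, Ring.mul_inverse_cancel _ hdet, one_smul]
  rw [hadj, Matrix.smul_mul] at hc
  have hc2 : Commute (((y * h')⁻¹).val * (x * h).val) (idx17 T) := by
    have := hc.smul_left ((y * h').val.det)⁻¹
    rwa [smul_smul, inv_mul_cancel₀ hdet.ne_zero, one_smul] at this
  have hinv : Commute (h⁻¹).val (idx17 T) := hh.units_inv_left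
  have := (hh'.mul_left hc2).mul_left hinv
  have e5 : y⁻¹ * x = h' * ((y * h')⁻¹ * (x * h)) * h⁻¹ := by group
  rw [e5]
  simpa only [Units.val_mul] using this

/-- The map `(g,A) ↦ g A g⁻¹` induces a well-defined bijection
`GL(n,ℂ) ×_H Ad_H(𝒪⁰_B) → 𝒪_B`. -/
theorem statement17 (T : Setup3) :
    ∃ Φ : Quot (rel17 T) → {A : PM3 T // inOrbit3 T A},
      Function.Bijective Φ ∧
      ∀ x : (Matrix (Fin T.n) (Fin T.n) ℂ)ˣ × {A : PM3 T // inAdH T A},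
        (Φ (Quot.mk (rel17 T) x)).val =
          (x.1.val.map Polynomial.C) * x.2.val * ((x.1⁻¹).val.map Polynomial.C) := by
  have hwd : ∀ x y, rel17 T x y →
      (⟨cm17 T x.1.val * x.2.val * cm17 T x.1⁻¹.val, orbit_mem' T x.1 x.2.val x.2.2⟩ :
        {A : PM3 T // inOrbit3 T A}) =
      ⟨cm17 T y.1.val * y.2.val * cm17 T y.1⁻¹.val, orbit_mem' T y.1 y.2.val y.2.2⟩ := by
    rintro ⟨g, A⟩ ⟨g', A'⟩ ⟨h, hh, h1, h2⟩
    apply Subtype.ext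
    change g' = g * h⁻¹ at h1
    change A'.val = cm17 T h.val * A.val * cm17 T h⁻¹.val at h2
    subst h1
    dsimp only
    rw [h2, _root_.mul_inv_rev, inv_inv, Units.val_mul, Units.val_mul, map_mul, map_mul]
    have := cm_inv T h
    symm
    calc _ = cm17 T g.val * (cm17 T h⁻¹.val * cm17 T h.val) * A.val
        * (cm17 T h⁻¹.val * cm17 T h.val) * cm17 T g⁻¹.val := by simp only [mul_assoc]
      _ = _ := by rw [this]; simp only [mul_one]
  refine ⟨Quot.lift _ hwd, ⟨?_, ?_⟩, fun x => rfl⟩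
  · rintro ⟨g, A⟩ ⟨g', A'⟩ hxy
    have e : cm17 T g.val * A.val * cm17 T g⁻¹.val = cm17 T g'.val * A'.val * cm17 T g'⁻¹.val :=
      congrArg Subtype.val hxy
    apply Quot.sound
    refine ⟨g'⁻¹ * g, inj_key T g g' _ _ A.2 A'.2 e, by group, ?_⟩
    change A'.val = cm17 T (g'⁻¹ * g).val * A.val * cm17 T (g'⁻¹ * g)⁻¹.val
    rw [_root_.mul_inv_rev, inv_inv, Units.val_mul, Units.val_mul, map_mul, map_mul]
    symm
    calc _ = cm17 T g'⁻¹.val * (cm17 T g.val * A.val * cm17 T g⁻¹.val) * cm17 T g'.val := by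
          simp only [mul_assoc]
      _ = (cm17 T g'⁻¹.val * cm17 T g'.val) * A'.val * (cm17 T g'⁻¹.val * cm17 T g'.val) := by
          rw [e]; simp only [mul_assoc]
      _ = _ := by rw [cm_inv]; simp only [mul_one, one_mul]
  · rintro ⟨A, hdeg, g, hg, hd⟩
    rw [ct17_eq] at hg
    rw [dvd17_iff] at hd
    obtain ⟨u, hu⟩ := hg
    have hO : inOrbitO T (cm17 T u⁻¹.val * A * cm17 T u⁻¹⁻¹.val) := by
      refine ⟨deg_right T _ _ _ (deg_left T _ _ _ hdeg), cm17 T u⁻¹.val * g, ?_, ?_⟩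
      · rw [ct17_eq, map_mul, ct17_cm17, ← hu, Units.inv_mul]
      · rw [dvd17_iff]
        exact conj17 T u⁻¹ _ _ _ _ hd
    have hAd : inAdH T (cm17 T u⁻¹.val * A * cm17 T u⁻¹⁻¹.val) := by
      refine ⟨1, ?_, _, hO, ?_⟩
      · rw [blockDiag_iff]; exact Commute.one_left _
      · change _ = cm17 T (1 : (Matrix (Fin T.n) (Fin T.n) ℂ)ˣ).val * _ *
          cm17 T (1⁻¹ : (Matrix (Fin T.n) (Fin T.n) ℂ)ˣ).val
        rw [inv_one, Units.val_one, map_one, one_mul, mul_one]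
    refine ⟨Quot.mk _ (u, ⟨_, hAd⟩), Subtype.ext ?_⟩
    change cm17 T u.val * (cm17 T u⁻¹.val * A * cm17 T u⁻¹⁻¹.val) * cm17 T u⁻¹.val = A
    rw [inv_inv]
    calc _ = (cm17 T u.val * cm17 T u⁻¹.val) * A * (cm17 T u.val * cm17 T u⁻¹.val) := by
          simp only [mul_assoc]
      _ = _ := by rw [cm_inv_r]; simp only [mul_one, one_mul]

end

end DS3
end

section
/- An element g ∈ G^o_k preserves B + (𝔲_1^+ ⊕ 𝔲_1^−)x^{−1}, i.e. g^{−1}bg ∈ B + (𝔲_1^+ ⊕ 𝔲_1^−)x^{−1} for every b ∈ B + (𝔲_1^+ ⊕ 𝔲_1^−)x^{−1}, if and only if g ∈ H_k = {I_n + Σ_{i=1}^{k−1} h_i x^i : h_i ∈ 𝔥_{i+1} for i = 1,…,k−1}, where 𝔥_k = M(n,ℂ). -/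
open Polynomial Matrix

namespace DS3

noncomputable section

/-- Blocks `j` and `j'` lie in the same simultaneous invariant subspace
`V_{⟨t,·⟩}` of `(B_{t+1},…,B_k)` iff the coefficients of `q_j` and `q_{j'}` agree
in all degrees `> t`. -/
def simRel (T : Setup3) (t : ℕ) (j j' : Fin T.m) : Prop :=
  ∀ l : ℕ, t < l → (T.q j).coeff l = (T.q j').coeff l

/-- Membership in `B + (𝔲₁⁺ ⊕ 𝔲₁⁻) x⁻¹`: the off-block-diagonal perturbations of
the residue term of `B`. -/
def inBU (T : Setup3) (b : PM3 T) : Prop :=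
  ∃ U : Matrix (Fin T.n) (Fin T.n) ℂ,
    (∀ a c, (T.emb.symm a).1 = (T.emb.symm c).1 → U a c = 0) ∧
    b = Bmat3 T + Matrix.of fun a c => Polynomial.C (U a c) * Polynomial.X ^ (T.k - 1)

/-- The polynomial on the diagonal of `B`. -/
def Qp (T : Setup3) (a : Fin T.n) : Polynomial ℂ :=
  Polynomial.reflect T.k (T.q (T.emb.symm a).1)

lemma sigma_aux_s18 {m : ℕ} {ns : Fin m → ℕ} (s t : Σ j : Fin m, Fin (ns j)) (h : s.1 = t.1) :
    (Fin.cast (by rw [h]) s.2 = t.2) ↔ s = t := by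
  obtain ⟨s1, s2⟩ := s
  obtain ⟨t1, t2⟩ := t
  dsimp only at h
  subst h
  simp

lemma Bmat3_eq (T : Setup3) : ∃ M : Matrix (Fin T.n) (Fin T.n) ℂ, ∀ a b,
    Bmat3 T a b = (if a = b then Qp T b else 0) + C (M a b) * X ^ (T.k - 1) := by
  have key : ∀ a b, ∃ z : ℂ,
      Bmat3 T a b = (if a = b then Qp T b else 0) + C z * X ^ (T.k - 1) := by
    intro a b
    by_cases h : (T.emb.symm a).1 = (T.emb.symm b).1
    · refine ⟨T.R (T.emb.symm b).1 (Fin.cast (by rw [h]) (T.emb.symm a).2)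
              (T.emb.symm b).2, ?_⟩
      simp only [Bmat3, Matrix.of_apply, h, dite_true]
      congr 1
      have := sigma_aux_s18 (T.emb.symm a) (T.emb.symm b) h
      rw [T.emb.symm.injective.eq_iff] at this
      simp only [this, Qp]
    · refine ⟨0, ?_⟩
      have hab : a ≠ b := fun e => h (by rw [e])
      simp [Bmat3, h, hab]
  choose M hM using key
  exact ⟨M, hM⟩

lemma key_dvd (T : Setup3) (g : PM3 T) (hconst : (g.map fun r => r.coeff 0) = 1)
    (U U' : Matrix (Fin T.n) (Fin T.n) ℂ) (a c : Fin T.n) :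
    (X ^ T.k : Polynomial ℂ) ∣ (HSub.hSub (α := PM3 T) (β := PM3 T) (γ := PM3 T)
      (g * (Bmat3 T + Matrix.of fun a c => C (U' a c) * X ^ (T.k - 1)))
      ((Bmat3 T + Matrix.of fun a c => C (U a c) * X ^ (T.k - 1)) * g)) a c ↔
    (X ^ T.k : Polynomial ℂ) ∣ g a c * (Qp T c - Qp T a) + C (U' a c - U a c) * X ^ (T.k - 1) := by
  obtain ⟨M, hM⟩ := Bmat3_eq T
  let D : PM3 T := Matrix.diagonal (Qp T)
  let S : Matrix (Fin T.n) (Fin T.n) ℂ → PM3 T := fun V =>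
    Matrix.of fun a c => C (M a c + V a c) * X ^ (T.k - 1)
  have hb : ∀ V : Matrix (Fin T.n) (Fin T.n) ℂ,
      Bmat3 T + Matrix.of (fun a c => C (V a c) * X ^ (T.k - 1)) = D + S V := by
    intro V
    ext1 i j
    simp only [Matrix.add_apply, Matrix.of_apply, hM, D, S, Matrix.diagonal_apply, C_add]
    by_cases h : i = j
    · subst h; simp; ring
    · simp [h]; ring
  rw [hb, hb]
  have hN : ∀ i j, (X : Polynomial ℂ) ∣ (g - 1) i j := by
    intro i j
    rw [X_dvd_iff]
    have := congrFun (congrFun hconst i) j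
    simp only [Matrix.map_apply] at this
    rw [Matrix.sub_apply, coeff_sub, this]
    by_cases h : i = j <;> simp [Matrix.one_apply, h]
  have hk := T.hk
  have hX : (X ^ T.k : Polynomial ℂ) = X * X ^ (T.k - 1) := by
    rw [← pow_succ']; congr 1; omega
  have hS : ∀ V i j, (X ^ (T.k - 1) : Polynomial ℂ) ∣ S V i j := fun V i j => by
    simp only [S, Matrix.of_apply]; exact dvd_mul_left _ _
  have h1 : (X ^ T.k : Polynomial ℂ) ∣ ((g - 1) * S U' - S U * (g - 1)) a c := by
    rw [Matrix.sub_apply, Matrix.mul_apply, Matrix.mul_apply]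
    refine dvd_sub (Finset.dvd_sum fun j _ => ?_) (Finset.dvd_sum fun j _ => ?_)
    · rw [hX]; exact mul_dvd_mul (hN _ _) (hS _ _ _)
    · rw [hX, mul_comm X]; exact mul_dvd_mul (hS _ _ _) (hN _ _)
  have h2 : (g * (D + S U') - (D + S U) * g) a c =
      (g a c * (Qp T c - Qp T a) + C (U' a c - U a c) * X ^ (T.k - 1)) +
      ((g - 1) * S U' - S U * (g - 1)) a c := by
    have e : g * (D + S U') - (D + S U) * g = (g * D - D * g) + (S U' - S U) +
      ((g - 1) * S U' - S U * (g - 1)) := by noncomm_ring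
    rw [e, Matrix.add_apply, Matrix.add_apply]
    congr 1
    simp only [Matrix.sub_apply, D, S, Matrix.mul_diagonal, Matrix.diagonal_mul, Matrix.of_apply,
      C_add, C_sub]
    ring
  rw [h2]
  exact dvd_add_left h1

lemma coeff_Qp (T : Setup3) (a : Fin T.n) (j : ℕ) (hj : j ≤ T.k) :
    (Qp T a).coeff j = (T.q (T.emb.symm a).1).coeff (T.k - j) := by
  rw [Qp, coeff_reflect, revAt_le hj]

lemma dvd_iff_coeff (T : Setup3) (g : PM3 T)
    (hconst : (g.map fun r => r.coeff 0) = 1) (a c : Fin T.n) :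
    (X ^ (T.k - 1) : Polynomial ℂ) ∣ g a c * (Qp T c - Qp T a) ↔
    ∀ i : ℕ, 1 ≤ i → i ≤ T.k - 1 →
        ¬ simRel T (i + 1) (T.emb.symm a).1 (T.emb.symm c).1 → (g a c).coeff i = 0 := by
  have hk := T.hk
  constructor
  · intro h i hi hik hs
    by_contra hne
    simp only [simRel, not_forall] at hs
    obtain ⟨l, hl, hlne⟩ := hs
    have hlk : l ≤ T.k := by
      by_contra hlk
      apply hlne
      rw [coeff_eq_zero_of_natDegree_lt, coeff_eq_zero_of_natDegree_lt]
      · exact lt_of_le_of_lt (T.hqdeg _) (by omega)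
      · exact lt_of_le_of_lt (T.hqdeg _) (by omega)
    have hp : (Qp T c - Qp T a).coeff (T.k - l) ≠ 0 := by
      rw [coeff_sub, coeff_Qp _ _ _ (by omega), coeff_Qp _ _ _ (by omega),
        show T.k - (T.k - l) = l by omega]
      exact fun e => hlne (sub_eq_zero.mp e).symm
    have hp0 : Qp T c - Qp T a ≠ 0 := fun e => hp (by rw [e]; simp)
    have hg0 : g a c ≠ 0 := fun e => hne (by rw [e]; simp)
    have t1 := natTrailingDegree_le_of_ne_zero hp
    have t2 := natTrailingDegree_le_of_ne_zero hne
    have t3 := natTrailingDegree_mul hg0 hp0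
    have t4 : (g a c * (Qp T c - Qp T a)).trailingCoeff ≠ 0 :=
      trailingCoeff_nonzero_iff_nonzero.mpr (mul_ne_zero hg0 hp0)
    exact t4 (X_pow_dvd_iff.mp h _ (by omega))
  · intro h
    rw [X_pow_dvd_iff]
    intro d hd
    rw [coeff_mul]
    refine Finset.sum_eq_zero fun x hx => ?_
    rw [Finset.HasAntidiagonal.mem_antidiagonal] at hx
    by_cases hp : (Qp T c - Qp T a).coeff x.2 = 0
    · rw [hp, mul_zero]
    have hgi : (g a c).coeff x.1 = 0 := by
      rcases Nat.eq_zero_or_pos x.1 with h0 | h0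
      · have := congrFun (congrFun hconst a) c
        simp only [Matrix.map_apply] at this
        rw [h0, this, Matrix.one_apply_ne]
        rintro rfl
        simp at hp
      · refine h _ h0 (by omega) fun hs => hp ?_
        rw [coeff_sub, coeff_Qp _ _ _ (by omega), coeff_Qp _ _ _ (by omega),
          hs (T.k - x.2) (by omega), sub_self]
    rw [hgi, zero_mul]

/-- An element `g ∈ G⁰_k` preserves `B + (𝔲₁⁺ ⊕ 𝔲₁⁻) x⁻¹` (i.e. `g⁻¹bg` stays in
this set for every `b` in it) iff `g ∈ ℋ_k`, i.e. the coefficient of `xⁱ` in `g`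
lies in `𝔥_{i+1}` for `i = 1,…,k-1` (where `𝔥_k = M(n,ℂ)`). -/
theorem statement18 (T : Setup3) (hk1 : 1 < T.k) (g : PM3 T)
    (hdeg : degLT3 T T.k g) (hconst : (g.map fun r => r.coeff 0) = 1) :
    (∀ b : PM3 T, inBU T b → ∃ b' : PM3 T, inBU T b' ∧
        ∀ a c, (Polynomial.X ^ T.k : Polynomial ℂ) ∣ (g * b' - b * g) a c) ↔
    (∀ i : ℕ, 1 ≤ i → i ≤ T.k - 1 → ∀ a c,
        ¬ simRel T (i + 1) (T.emb.symm a).1 (T.emb.symm c).1 →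
        (g a c).coeff i = 0) := by
  have hk := T.hk
  have hX : (X ^ (T.k - 1) : Polynomial ℂ) ∣ X ^ T.k := pow_dvd_pow _ (by omega)
  constructor
  · intro H i hi hik a c
    refine (dvd_iff_coeff T g hconst a c).mp ?_ i hi hik
    obtain ⟨b', ⟨U', -, rfl⟩, hd⟩ := H _ ⟨0, by simp, rfl⟩
    have := (key_dvd T g hconst 0 U' a c).mp (hd a c)
    exact (dvd_add_left (dvd_mul_left _ _)).mp (hX.trans this)
  · rintro H b ⟨U, hU, rfl⟩
    refine ⟨_, ⟨Matrix.of fun a c => U a c - (g a c * (Qp T c - Qp T a)).coeff (T.k - 1),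
      ?_, rfl⟩, fun a c => ?_⟩
    · intro a c hac
      simp [hU a c hac, Qp, hac]
    · rw [key_dvd T g hconst]
      have h1 := (dvd_iff_coeff T g hconst a c).mpr fun i hi hik => H i hi hik a c
      rw [X_pow_dvd_iff] at h1 ⊢
      intro d hd
      rw [coeff_add, coeff_C_mul, coeff_X_pow]
      by_cases e : d = T.k - 1
      · subst e; simp
      · rw [h1 d (by omega)]; simp [e]

end

end DS3
end

section
/- Let A, A′ ∈ M(n,ℂ) satisfy AA′ = A′A and Ker A ∩ Ker A′ = {0}, and let V ⊆ ℂ^n be an A′-invariant subspace. Then dim V − dim A′V = dim AV − dim AA′V. -/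
open Matrix

lemma aux_rank {n : ℕ} (f : (Fin n → ℂ) →ₗ[ℂ] (Fin n → ℂ)) (V : Submodule ℂ (Fin n → ℂ)) :
    Module.finrank ℂ (V.map f) + Module.finrank ℂ (V ⊓ LinearMap.ker f : Submodule ℂ (Fin n → ℂ))
      = Module.finrank ℂ V := by
  have h := LinearMap.finrank_range_add_finrank_ker (f ∘ₗ V.subtype)
  rw [LinearMap.range_comp, Submodule.range_subtype, LinearMap.ker_comp] at h
  rw [← h, ← Submodule.map_comap_subtype, Submodule.finrank_map_subtype_eq]

/-- Let `A, A' ∈ M(n,ℂ)` commute with `Ker A ∩ Ker A' = {0}`, and let `V ⊆ ℂⁿ` be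
an `A'`-invariant subspace.  Then `dim V - dim A'V = dim AV - dim AA'V`. -/
theorem statement19 (n : ℕ) (A A' : Matrix (Fin n) (Fin n) ℂ)
    (hcomm : A * A' = A' * A)
    (hker : LinearMap.ker (Matrix.toLin' A) ⊓ LinearMap.ker (Matrix.toLin' A') = ⊥)
    (V : Submodule ℂ (Fin n → ℂ)) (hV : ∀ v ∈ V, A'.mulVec v ∈ V) :
    (Module.finrank ℂ V : ℤ) - Module.finrank ℂ (V.map (Matrix.toLin' A')) =
      (Module.finrank ℂ (V.map (Matrix.toLin' A)) : ℤ)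
        - Module.finrank ℂ ((V.map (Matrix.toLin' A')).map (Matrix.toLin' A)) := by
  have h1 := aux_rank (Matrix.toLin' A) V
  have h2 := aux_rank (Matrix.toLin' A) (V.map (Matrix.toLin' A'))
  have h3 := aux_rank (Matrix.toLin' A') (V ⊓ LinearMap.ker (Matrix.toLin' A))
  have h4 : V ⊓ LinearMap.ker (Matrix.toLin' A) ⊓ LinearMap.ker (Matrix.toLin' A') = ⊥ := by
    rw [inf_assoc, hker, inf_bot_eq]
  rw [h4, finrank_bot, add_zero] at h3
  have hle : (V ⊓ LinearMap.ker (Matrix.toLin' A)).map (Matrix.toLin' A') ≤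
      V.map (Matrix.toLin' A') ⊓ LinearMap.ker (Matrix.toLin' A) := by
    rintro _ ⟨w, ⟨hw, hk⟩, rfl⟩
    refine ⟨⟨w, hw, rfl⟩, ?_⟩
    have hk' : A *ᵥ w = 0 := by simpa using hk
    simp only [SetLike.mem_coe, LinearMap.mem_ker, Matrix.toLin'_apply]
    rw [Matrix.mulVec_mulVec, hcomm, ← Matrix.mulVec_mulVec, hk', Matrix.mulVec_zero]
  have hle2 : V.map (Matrix.toLin' A') ⊓ LinearMap.ker (Matrix.toLin' A) ≤
      V ⊓ LinearMap.ker (Matrix.toLin' A) := by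
    refine inf_le_inf_right _ ?_
    rintro _ ⟨w, hw, rfl⟩
    simpa using hV w hw
  have h5 := Submodule.finrank_mono hle
  have h6 := Submodule.finrank_mono hle2
  omega
end
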